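/- arXiv:2401.06685 — 3 statements merged into one kernel-verified Lean document; each statement's English description precedes it below -/
import Mathlib

section
/- Let 0 < 4ℓ ≤ n be integers and let H be a set of intervals that is 4ℓ-powerful in (0,n). Then there exists H' ⊆ H, ℓ-powerful in (0,n), which can be written in standard form {(a_i,b_i) : 1 ≤ i ≤ t}, such that the numbers appear in the order 0 = a_1 < a_2 < min(a_3,b_1) ≤ max(a_3,b_1) < min(a_4,b_2) ≤ max(a_4,b_2) < ⋯ < min(a_t,b_{t−2}) ≤ max(a_t,b_{t−2}) < b_{t−1} < b_t = n, and moreover any two of the numbers a_1,…,a_t, b_1,…,b_t differ by at least ℓ, except possibly the pairs (a_1,a_2), (b_{t−1},b_t), and (a_i, b_{i−2}) for 3 ≤ i ≤ t. -/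
/-- `p` captures `q`: intervals `p = (a,b)`, `q = (c,d)` with `a ≤ c ≤ d ≤ b`. -/
def Captures (p q : ℤ × ℤ) : Prop := p.1 ≤ q.1 ∧ q.1 ≤ q.2 ∧ q.2 ≤ p.2

/-- `H` is `ℓ`-powerful in `(0,n)`. -/
def Powerful (ℓ n : ℤ) (H : Finset (ℤ × ℤ)) : Prop :=
  (∀ p ∈ H, 0 ≤ p.1 ∧ p.1 ≤ p.2 ∧ p.2 ≤ n) ∧
  ∀ h : ℤ, 0 ≤ h → h + ℓ ≤ n → ∃ p ∈ H, Captures p (h, h + ℓ)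

/-- `H = {(a_i, b_i) : 1 ≤ i ≤ t}` in standard form (strictly increasing `a`'s and `b`'s). -/
def StdForm (H : Finset (ℤ × ℤ)) (t : ℕ) (a b : ℕ → ℤ) : Prop :=
  (∀ i j : ℕ, 1 ≤ i → i < j → j ≤ t → a i < a j ∧ b i < b j) ∧
  H = (Finset.Icc 1 t).image fun i => (a i, b i)

/-- `H` is minimally `ℓ`-powerful in `(0,n)`. -/
def MinPowerful (ℓ n : ℤ) (H : Finset (ℤ × ℤ)) : Prop :=
  Powerful ℓ n H ∧ ∀ H' ⊆ H, Powerful ℓ n H' → H' = H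

/-!
Among the `(ℓ + 1)`-powerful subsets of `H`, take one of least cardinality and, subject to that, one
capturing as many intervals of length `2ℓ + 1` as possible. Write it in standard form.

Consecutive members overlap by at least `ℓ`, and by cardinality members two apart overlap by less
than `ℓ`. If `a (i + 3) < b i + ℓ`, a single member of `H` capturing `(b i - ℓ, b i + 3ℓ)` would
replace both the `(i + 1)`-st and the `(i + 2)`-nd interval. If `a (i + 2) ≤ b i`, a member of `H`
capturing `(b i - 2ℓ, b i + 2ℓ)` could replace the `(i + 1)`-st interval, overlapping both its
neighbours by `2ℓ`; so by the second extremality the `(i + 1)`-st interval already overlaps both its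
neighbours by `2ℓ`. All the separations follow from these facts.
-/

section Windows

/-- The left ends of the intervals of length `L` that are captured by some member of `K`. -/
def windows (L : ℤ) (K : Finset (ℤ × ℤ)) : Set ℤ := {h | ∃ p ∈ K, Captures p (h, h + L)}

/-- The intervals `p` and `r`, in this order, overlap by at least `m` and together cover `s`. Hence
every interval of length `m + 1` captured by `s` is captured by `p` or by `r`. -/
def Bridges (m : ℤ) (p r s : ℤ × ℤ) : Prop := p.1 ≤ s.1 ∧ s.2 ≤ r.2 ∧ r.1 + m ≤ p.2

variable {m ℓ L n : ℤ} {H K X : Finset (ℤ × ℤ)}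

lemma Bridges.captures_or_captures {p r s : ℤ × ℤ} {h : ℤ} (hb : Bridges m p r s)
    (hs : Captures s (h, h + (m + 1))) :
    Captures p (h, h + (m + 1)) ∨ Captures r (h, h + (m + 1)) := by
  simp only [Bridges, Captures] at *
  omega

lemma windows_subset_of_bridged
    (hX : ∀ s ∈ K, s ∉ X → ∃ p ∈ X, ∃ r ∈ X, Bridges m p r s) :
    windows (m + 1) K ⊆ windows (m + 1) X := by
  rintro h ⟨s, hs, hsh⟩
  by_cases hsX : s ∈ X
  · exact ⟨s, hsX, hsh⟩
  · obtain ⟨p, hp, r, hr, hb⟩ := hX s hs hsX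
    exact (hb.captures_or_captures hsh).elim (⟨p, hp, ·⟩) (⟨r, hr, ·⟩)

/-- The interval `(h, h + L)` is translated into `(0, n)` before it is captured. -/
lemma Powerful.exists_clamped (hH : Powerful L n H) (hL : L ≤ n) (h : ℤ) :
    ∃ q ∈ H, q.1 ≤ max 0 h ∧ min n (h + L) ≤ q.2 := by
  obtain ⟨q, hq, hq₁, -, hq₂⟩ := hH.2 (max 0 (min h (n - L))) (by omega) (by omega)
  exact ⟨q, hq, by simp only at hq₁; omega, by simp only at hq₂; omega⟩

lemma Powerful.mono (hH : Powerful L n H) (hℓ : 0 ≤ ℓ) (hℓL : ℓ ≤ L) (hL : L ≤ n) :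
    Powerful ℓ n H := by
  refine ⟨hH.1, fun h hh hhn => ?_⟩
  obtain ⟨q, hq, hq₁, hq₂⟩ := hH.exists_clamped hL h
  exact ⟨q, hq, by simp only [Captures]; omega⟩

lemma Powerful.of_windows_subset (hH : Powerful L n H) (hXH : X ⊆ H) (hK : Powerful ℓ n K)
    (hw : windows ℓ K ⊆ windows ℓ X) : Powerful ℓ n X :=
  ⟨fun p hp => hH.1 p (hXH hp), fun h hh hhn => hw (hK.2 h hh hhn)⟩

end Windows

section StandardForm

variable {m n : ℤ} {K : Finset (ℤ × ℤ)} {t : ℕ} {a b : ℕ → ℤ}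

lemma exists_stdForm_of_antichain
    (hK : ∀ s ∈ K, ∀ s' ∈ K, s.1 ≤ s'.1 → s'.2 ≤ s.2 → s = s') :
    ∃ (t : ℕ) (a b : ℕ → ℤ), StdForm K t a b := by
  induction K using Finset.induction_on_max_value fun p : ℤ × ℤ => p.1 with
  | empty => exact ⟨0, 0, 0, fun i j _ _ _ => by omega, by simp⟩
  | insert x s hxs hmax ih =>
    obtain ⟨t, a, b, hlt, rfl⟩ := ih fun u hu v hv =>
      hK u (Finset.mem_insert_of_mem hu) v (Finset.mem_insert_of_mem hv)
    have below_last : ∀ i, 1 ≤ i → i ≤ t → a i < x.1 ∧ b i < x.2 := by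
      intro i hi hit
      have hmem : (a i, b i) ∈ (Finset.Icc 1 t).image fun i => (a i, b i) :=
        Finset.mem_image_of_mem _ (Finset.mem_Icc.2 ⟨hi, hit⟩)
      have hne : (a i, b i) ≠ x := fun h => hxs (h ▸ hmem)
      have hle : a i ≤ x.1 := hmax _ hmem
      have hb : b i < x.2 := not_le.1 fun h => hne <|
        hK _ (Finset.mem_insert_of_mem hmem) _ (Finset.mem_insert_self ..) hle h
      exact ⟨not_le.1 fun h => hne.symm <|
        hK _ (Finset.mem_insert_self ..) _ (Finset.mem_insert_of_mem hmem) h hb.le, hb⟩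
    refine ⟨t + 1, Function.update a (t + 1) x.1, Function.update b (t + 1) x.2, ?_, ?_⟩
    · intro i j hi hij hj
      have hit : i ≠ t + 1 := by omega
      rw [Function.update_of_ne hit, Function.update_of_ne hit]
      rcases hj.lt_or_eq with hj | rfl
      · rw [Function.update_of_ne (by omega), Function.update_of_ne (by omega)]
        exact hlt i j hi hij (by omega)
      · simpa using below_last i hi (by omega)
    · rw [← Finset.insert_Icc_right_eq_Icc_add_one (by omega), Finset.image_insert]
      congr 1
      · simp
      · refine Finset.image_congr fun i hi => ?_
        have : i ≠ t + 1 := by have := (Finset.mem_Icc.1 hi).2; omega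
        simp [Function.update_of_ne this]

namespace StdForm

variable (hs : StdForm K t a b)
include hs

lemma mem {i : ℕ} (hi : 1 ≤ i) (hit : i ≤ t) : (a i, b i) ∈ K := by
  rw [hs.2]
  exact Finset.mem_image_of_mem _ (Finset.mem_Icc.2 ⟨hi, hit⟩)

lemma exists_index {p : ℤ × ℤ} (hp : p ∈ K) : ∃ i, 1 ≤ i ∧ i ≤ t ∧ p = (a i, b i) := by
  rw [hs.2] at hp
  obtain ⟨i, hi, rfl⟩ := Finset.mem_image.1 hp
  exact ⟨i, (Finset.mem_Icc.1 hi).1, (Finset.mem_Icc.1 hi).2, rfl⟩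

lemma le_of_le {i j : ℕ} (hi : 1 ≤ i) (hij : i ≤ j) (hj : j ≤ t) : a i ≤ a j ∧ b i ≤ b j := by
  rcases hij.eq_or_lt with rfl | hij
  · exact ⟨le_rfl, le_rfl⟩
  · exact (hs.1 i j hi hij hj).imp le_of_lt le_of_lt

lemma eq_of_eq {i j : ℕ} (hi : 1 ≤ i) (hit : i ≤ t) (hj : 1 ≤ j) (hjt : j ≤ t)
    (h : (a i, b i) = (a j, b j)) : i = j := by
  have ha : a i = a j := congrArg Prod.fst h
  rcases lt_trichotomy i j with hij | hij | hij
  · exact absurd ha (hs.1 i j hi hij hjt).1.ne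
  · exact hij
  · exact absurd ha (hs.1 j i hj hij hit).1.ne'

lemma mem_erase {i k : ℕ} (hk : 1 ≤ k) (hkt : k ≤ t) (hi : 1 ≤ i) (hit : i ≤ t) (hki : k ≠ i) :
    (a k, b k) ∈ K.erase (a i, b i) :=
  Finset.mem_erase.2 ⟨mt (hs.eq_of_eq hk hkt hi hit) hki, hs.mem hk hkt⟩

lemma mem_sdiff_pair {i k : ℕ} (hi : 1 ≤ i) (hit : i + 1 ≤ t) (hk : 1 ≤ k) (hkt : k ≤ t)
    (hki : k ≠ i) (hki' : k ≠ i + 1) :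
    (a k, b k) ∈ K \ {(a i, b i), (a (i + 1), b (i + 1))} := by
  simp only [Finset.mem_sdiff, Finset.mem_insert, Finset.mem_singleton, not_or]
  exact ⟨hs.mem hk hkt, mt (hs.eq_of_eq hk hkt hi (by omega)) hki,
    mt (hs.eq_of_eq hk hkt (by omega) hit) hki'⟩

lemma left_le_of_right_lt {p : ℤ × ℤ} (hp : p ∈ K) {i : ℕ} (hit : i ≤ t) (h : b i < p.2) :
    a (i + 1) ≤ p.1 := by
  obtain ⟨j, hj, hjt, rfl⟩ := hs.exists_index hp
  have hij : i + 1 ≤ j := by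
    by_contra hji
    have := (hs.le_of_le hj (by omega : j ≤ i) hit).2
    simp only at h
    omega
  exact (hs.le_of_le (by omega) hij hjt).1

lemma right_le_of_left_lt {p : ℤ × ℤ} (hp : p ∈ K) {i : ℕ} (hi : 1 ≤ i) (hit : i ≤ t)
    (h : p.1 < a (i + 1)) : p.2 ≤ b i := by
  obtain ⟨j, hj, hjt, rfl⟩ := hs.exists_index hp
  have hji : j ≤ i := by
    by_contra hij
    have := (hs.le_of_le (by omega) (by omega : i + 1 ≤ j) hjt).1
    simp only at h
    omega
  exact (hs.le_of_le hj hji hit).2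

lemma left_one_eq (hK : Powerful m n K) (hm : m ≤ n) : a 1 = 0 := by
  obtain ⟨q, hq, hq₁, -⟩ := hK.exists_clamped hm 0
  obtain ⟨i, hi, hit, rfl⟩ := hs.exists_index hq
  have := (hs.le_of_le le_rfl hi hit).1
  have := (hK.1 _ (hs.mem le_rfl (hi.trans hit))).1
  simp only [max_self] at *
  omega

lemma right_last_eq (hK : Powerful m n K) (hm₀ : 0 ≤ m) (hm : m ≤ n) : b t = n := by
  obtain ⟨q, hq, -, hq₂⟩ := hK.exists_clamped hm n
  obtain ⟨i, hi, hit, rfl⟩ := hs.exists_index hq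
  have := (hs.le_of_le hi hit le_rfl).2
  have := (hK.1 _ (hs.mem (hi.trans hit) le_rfl)).2.2
  simp only at *
  omega

lemma left_succ_add_le_right (hK : Powerful (m + 1) n K) (hm : m + 1 ≤ n) {i : ℕ}
    (hi : 1 ≤ i) (hit : i + 1 ≤ t) : a (i + 1) + m ≤ b i := by
  obtain ⟨q, hq, hq₁, hq₂⟩ := hK.exists_clamped hm (b i - m)
  have ha := (hK.1 _ (hs.mem hi (by omega))).1
  have hbn := (hK.1 _ (hs.mem (by omega) hit)).2.2
  obtain ⟨haa, hbb⟩ := hs.1 i (i + 1) hi (by omega) hit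
  have := hs.left_le_of_right_lt hq (i := i) (by omega) (by simp only at hbn; omega)
  simp only at ha
  omega

lemma left_add_le_right (hK : Powerful (m + 1) n K) (hm₀ : 0 ≤ m) (hm : m + 1 ≤ n) {i j : ℕ}
    (hi : 1 ≤ i) (hit : i ≤ t) (hj : 1 ≤ j) (hjt : j ≤ t) (hij : i ≤ j + 1) :
    a i + m ≤ b j := by
  rcases hjt.lt_or_eq with hjt | rfl
  · have := hs.left_succ_add_le_right hK hm hj hjt
    have := (hs.le_of_le hi hij hjt).1
    omega
  · have hlast := hs.right_last_eq hK (by omega) hm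
    rcases hj.lt_or_eq with hj | rfl
    · obtain ⟨k, rfl⟩ : ∃ k, j = k + 1 := ⟨j - 1, by omega⟩
      have := hs.left_succ_add_le_right hK hm (i := k) (by omega) le_rfl
      have := (hs.le_of_le hi hit le_rfl).1
      have := (hs.1 k (k + 1) (by omega) (by omega) le_rfl).2
      omega
    · have := hs.left_one_eq hK hm
      obtain rfl : i = 1 := by omega
      omega

end StdForm

end StandardForm

section Optimal

/-- `K` is a subset of `H` that is `(ℓ + 1)`-powerful in `(0,n)`, has the least possible
cardinality, and among such subsets captures an inclusion-maximal set of intervals of length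
`2ℓ + 1`.

The lengths exceed `ℓ` and `2ℓ` by one because in an `(m + 1)`-powerful set, as end points are
integers, consecutive intervals overlap by at least `m`. -/
def IsOptimal (ℓ n : ℤ) (H K : Finset (ℤ × ℤ)) : Prop :=
  MinimalFor (fun X => X ⊆ H ∧ Powerful (ℓ + 1) n X)
    (fun X => toLex (X.card, OrderDual.toDual (windows (2 * ℓ + 1) X))) K

variable {ℓ L n : ℤ} {H K X : Finset (ℤ × ℤ)} {t : ℕ} {a b : ℕ → ℤ}

lemma exists_isOptimal (hH : Powerful (ℓ + 1) n H) : ∃ K, IsOptimal ℓ n H K :=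
  Set.Finite.exists_minimalFor _ {X | X ⊆ H ∧ Powerful (ℓ + 1) n X}
    (H.powerset.finite_toSet.subset fun _ hX => Finset.mem_coe.2 (Finset.mem_powerset.2 hX.1))
    ⟨H, subset_rfl, hH⟩

namespace IsOptimal

lemma subset (hK : IsOptimal ℓ n H K) : K ⊆ H := hK.prop.1

lemma powerful (hK : IsOptimal ℓ n H K) : Powerful (ℓ + 1) n K := hK.prop.2

lemma card_le (hK : IsOptimal ℓ n H K) (hH : Powerful L n H) (hXH : X ⊆ H)
    (hX : windows (ℓ + 1) K ⊆ windows (ℓ + 1) X) : K.card ≤ X.card := by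
  by_contra! hlt
  have hXK := hK.le_of_le ⟨hXH, hH.of_windows_subset hXH hK.powerful hX⟩
    (Prod.Lex.toLex_le_toLex.2 (.inl hlt))
  exact hlt.not_ge (Prod.Lex.toLex_le_toLex'.1 hXK).1

lemma windows_subset (hK : IsOptimal ℓ n H K) (hH : Powerful L n H) (hXH : X ⊆ H)
    (hcard : X.card ≤ K.card) (hX : windows (ℓ + 1) K ⊆ windows (ℓ + 1) X)
    (hX₂ : windows (2 * ℓ + 1) K ⊆ windows (2 * ℓ + 1) X) :
    windows (2 * ℓ + 1) X ⊆ windows (2 * ℓ + 1) K := by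
  have hXK := hK.le_of_le ⟨hXH, hH.of_windows_subset hXH hK.powerful hX⟩
    (Prod.Lex.toLex_le_toLex'.2 ⟨hcard, fun _ => hX₂⟩)
  exact (Prod.Lex.toLex_le_toLex'.1 hXK).2 (hcard.antisymm' (Prod.Lex.toLex_le_toLex'.1 hXK).1)

lemma windows_not_subset_erase (hK : IsOptimal ℓ n H K) (hH : Powerful L n H) {s : ℤ × ℤ}
    (hs : s ∈ K) : ¬ windows (ℓ + 1) K ⊆ windows (ℓ + 1) (K.erase s) := fun hw =>
  (Finset.card_erase_lt_of_mem hs).not_ge <|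
    hK.card_le hH ((Finset.erase_subset _ _).trans hK.subset) hw

lemma antichain (hK : IsOptimal ℓ n H K) (hH : Powerful L n H) :
    ∀ s ∈ K, ∀ s' ∈ K, s.1 ≤ s'.1 → s'.2 ≤ s.2 → s = s' := by
  intro s hs s' hs' h₁ h₂
  by_contra hne
  refine hK.windows_not_subset_erase hH hs' ?_
  rintro h ⟨p, hp, hph⟩
  by_cases hps : p = s'
  · subst hps
    exact ⟨s, Finset.mem_erase.2 ⟨hne, hs⟩, h₁.trans hph.1, hph.2.1, hph.2.2.trans h₂⟩
  · exact ⟨p, Finset.mem_erase.2 ⟨hps, hp⟩, hph⟩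

lemma card_le_one_of_bridged (hK : IsOptimal ℓ n H K) (hH : Powerful L n H) {q : ℤ × ℤ}
    (hq : q ∈ H) {D : Finset (ℤ × ℤ)} (hDK : D ⊆ K)
    (hD : ∀ s ∈ D, ∃ p ∈ insert q (K \ D), ∃ r ∈ insert q (K \ D), Bridges ℓ p r s) :
    D.card ≤ 1 := by
  have hle : K.card ≤ (insert q (K \ D)).card := by
    refine hK.card_le hH
      (Finset.insert_subset hq (Finset.sdiff_subset.trans hK.subset))
      (windows_subset_of_bridged fun s hs hsX => hD s ?_)
    by_contra hsD
    exact hsX (Finset.mem_insert_of_mem (Finset.mem_sdiff.2 ⟨hs, hsD⟩))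
  have := Finset.card_insert_le q (K \ D)
  have := Finset.card_sdiff_add_card_eq_card hDK
  omega

variable (hK : IsOptimal ℓ n H K) (hs : StdForm K t a b)
include hK hs

lemma right_lt_left_add_two (hH : Powerful L n H) {i : ℕ} (hi : 1 ≤ i) (hit : i + 2 ≤ t) :
    b i < a (i + 2) + ℓ := by
  by_contra! h
  have ha := (hs.1 i (i + 1) hi (by omega) (by omega)).1
  have hb := (hs.1 (i + 1) (i + 2) (by omega) (by omega) hit).2
  refine hK.windows_not_subset_erase hH (hs.mem (i := i + 1) (by omega) (by omega))
    (windows_subset_of_bridged fun s hsK hsX => ?_)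
  obtain rfl : s = (a (i + 1), b (i + 1)) := by
    by_contra hne
    exact hsX (Finset.mem_erase.2 ⟨hne, hsK⟩)
  exact ⟨_, hs.mem_erase hi (by omega) (by omega) (by omega) (by omega),
    _, hs.mem_erase (by omega) hit (by omega) (by omega) (by omega), ha.le, hb.le, h⟩

lemma not_bridged_pair (hH : Powerful L n H) {q : ℤ × ℤ} (hq : q ∈ H) {i : ℕ} (hi : 1 ≤ i)
    (hit : i + 1 ≤ t)
    (h : ∀ k, i ≤ k → k ≤ i + 1 →
      ∃ p ∈ insert q (K \ {(a i, b i), (a (i + 1), b (i + 1))}),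
      ∃ r ∈ insert q (K \ {(a i, b i), (a (i + 1), b (i + 1))}), Bridges ℓ p r (a k, b k)) :
    False := by
  have hcard := hK.card_le_one_of_bridged hH hq (Finset.insert_subset (hs.mem hi (by omega))
    (Finset.singleton_subset_iff.2 (hs.mem (by omega) hit))) <| by
      simp only [Finset.forall_mem_insert, Finset.mem_singleton, forall_eq]
      exact ⟨h i le_rfl (by omega), h (i + 1) (by omega) le_rfl⟩
  have hne := mt (hs.eq_of_eq hi (by omega) (by omega) hit) (by omega : i ≠ i + 1)
  rw [Finset.card_pair hne] at hcard
  omega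

lemma right_add_le_left_add_three (hℓ : 0 < ℓ) (hn : 4 * ℓ ≤ n) (hH : Powerful (4 * ℓ) n H)
    {i : ℕ} (hi : 1 ≤ i) (hit : i + 3 ≤ t) : b i + ℓ ≤ a (i + 3) := by
  by_contra! h
  have link {j k : ℕ} (hj : 1 ≤ j) (hjt : j ≤ t) (hk : 1 ≤ k) (hkt : k ≤ t) (hjk : j ≤ k + 1) :
      a j + ℓ ≤ b k := hs.left_add_le_right hK.powerful hℓ.le (by omega) hj hjt hk hkt hjk
  obtain ⟨q, hq, hq₁, hq₂⟩ := hH.exists_clamped hn (b i - ℓ)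
  have hai := (hK.powerful.1 _ (hs.mem hi (by omega))).1
  have hbn := (hK.powerful.1 _ (hs.mem (by omega) hit)).2.2
  simp only at hai hbn
  have hpq : q.1 + ℓ ≤ b i := by
    have := link (j := i) hi (by omega) hi (by omega) (by omega)
    omega
  have hqr : a (i + 3) + ℓ ≤ q.2 := by
    have := link (j := i + 3) (by omega) hit (by omega : 1 ≤ i + 3) hit (by omega)
    omega
  refine hK.not_bridged_pair hs hH hq (i := i + 1) (by omega) (by omega) fun k hk hk' => ?_
  obtain rfl | rfl : k = i + 1 ∨ k = i + 2 := by omega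
  · refine ⟨(a i, b i), Finset.mem_insert_of_mem (hs.mem_sdiff_pair (by omega) (by omega) hi
      (by omega) (by omega) (by omega)), q, Finset.mem_insert_self .., ?_, ?_, hpq⟩
    · exact (hs.1 i (i + 1) hi (by omega) (by omega)).1.le
    · have := hK.right_lt_left_add_two hs hH (i := i + 1) (by omega) hit
      exact this.le.trans hqr
  · refine ⟨q, Finset.mem_insert_self .., (a (i + 3), b (i + 3)), Finset.mem_insert_of_mem
      (hs.mem_sdiff_pair (by omega) (by omega) (by omega) hit (by omega) (by omega)), ?_, ?_, hqr⟩
    · have := hK.right_lt_left_add_two hs hH hi (by omega)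
      simp only
      omega
    · exact (hs.1 (i + 2) (i + 3) (by omega) (by omega) hit).2.le

lemma exists_mem_of_crossing (hℓ : 0 < ℓ) (hn : 4 * ℓ ≤ n) (hH : Powerful (4 * ℓ) n H)
    {i : ℕ} (hi : 1 ≤ i) (hit : i + 2 ≤ t) (hcross : a (i + 2) ≤ b i) :
    ∃ q ∈ H, q.1 + 2 * ℓ ≤ b i ∧ a (i + 2) + 2 * ℓ ≤ q.2 := by
  obtain ⟨q, hq, hq₁, hq₂⟩ := hH.exists_clamped hn (b i - 2 * ℓ)
  have bounds {k : ℕ} (hk : 1 ≤ k) (hkt : k ≤ t) : 0 ≤ a k ∧ a k ≤ b k ∧ b k ≤ n :=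
    hK.powerful.1 _ (hs.mem hk hkt)
  have hroom : a (i + 2) + ℓ ≤ n := (hs.left_add_le_right hK.powerful hℓ.le (by omega)
    (by omega) hit (by omega) hit (by omega)).trans (bounds (by omega) hit).2.2
  refine ⟨q, hq, ?_, ?_⟩
  · by_contra! hshort
    have hq_zero : q.1 ≤ 0 := by omega
    refine hK.not_bridged_pair hs hH hq hi (by omega) fun k hk hk' => ⟨q,
      Finset.mem_insert_self .., (a (i + 2), b (i + 2)), Finset.mem_insert_of_mem
      (hs.mem_sdiff_pair hi (by omega) (by omega) hit (by omega) (by omega)), ?_, ?_, ?_⟩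
    · exact hq_zero.trans (bounds (by omega) (by omega)).1
    · exact (hs.le_of_le (by omega) (by omega) hit).2
    · simp only
      omega
  · by_contra! hlong
    have hq_n : n ≤ q.2 := by omega
    refine hK.not_bridged_pair hs hH hq (i := i + 1) (by omega) hit fun k hk hk' => ⟨(a i, b i),
      Finset.mem_insert_of_mem (hs.mem_sdiff_pair (by omega) hit hi (by omega) (by omega)
      (by omega)), q, Finset.mem_insert_self .., ?_, ?_, ?_⟩
    · exact (hs.le_of_le hi (by omega) (by omega)).1
    · exact (bounds (by omega) (by omega)).2.2.trans hq_n
    · simp only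
      omega

lemma windows_insert_erase_subset (hℓ : 0 ≤ ℓ) (hH : Powerful L n H) {q : ℤ × ℤ} (hq : q ∈ H)
    {i : ℕ} (hi : 1 ≤ i) (hit : i + 2 ≤ t) (hpq : q.1 + 2 * ℓ ≤ b i) (hqr : a (i + 2) + 2 * ℓ ≤ q.2)
    (hmid : q.1 ≤ a (i + 1) ∨ b (i + 1) ≤ q.2) :
    windows (2 * ℓ + 1) (insert q (K.erase (a (i + 1), b (i + 1)))) ⊆ windows (2 * ℓ + 1) K := by
  set X := insert q (K.erase (a (i + 1), b (i + 1)))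
  have hqX : q ∈ X := Finset.mem_insert_self ..
  have hmem {k : ℕ} (hk : 1 ≤ k) (hkt : k ≤ t) (hki : k ≠ i + 1) : (a k, b k) ∈ X :=
    Finset.mem_insert_of_mem (hs.mem_erase hk hkt (by omega) (by omega) hki)
  have hbridge {m : ℤ} (hm : m ≤ 2 * ℓ) : windows (m + 1) K ⊆ windows (m + 1) X := by
    refine windows_subset_of_bridged fun s hsK hsX => ?_
    obtain rfl : s = (a (i + 1), b (i + 1)) := by
      by_contra hne
      exact hsX (Finset.mem_insert_of_mem (Finset.mem_erase.2 ⟨hne, hsK⟩))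
    rcases hmid with hqs | hsq
    · exact ⟨q, hqX, _, hmem (k := i + 2) (by omega) hit (by omega), hqs,
        (hs.le_of_le (by omega) (by omega) hit).2, by grind⟩
    · exact ⟨_, hmem hi (by omega) (by omega), q, hqX,
        (hs.le_of_le hi (by omega) (by omega)).1, hsq, by grind⟩
  have hcard : X.card ≤ K.card := (Finset.card_insert_le _ _).trans_eq
    (Finset.card_erase_add_one (hs.mem (by omega) (by omega)))
  exact hK.windows_subset hH
    (Finset.insert_subset hq ((Finset.erase_subset _ _).trans hK.subset)) hcard
    (hbridge (by omega)) (hbridge le_rfl)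

lemma add_two_mul_le_of_crossing (hℓ : 0 < ℓ) (hn : 4 * ℓ ≤ n) (hH : Powerful (4 * ℓ) n H)
    {i : ℕ} (hi : 1 ≤ i) (hit : i + 2 ≤ t) (hcross : a (i + 2) ≤ b i) :
    a (i + 1) + 2 * ℓ ≤ b i ∧ a (i + 2) + 2 * ℓ ≤ b (i + 1) := by
  obtain ⟨q, hq, hpq, hqr⟩ := hK.exists_mem_of_crossing hs hℓ hn hH hi hit hcross
  by_cases hmid : q.1 ≤ a (i + 1) ∨ b (i + 1) ≤ q.2
  · have hw := hK.windows_insert_erase_subset hs hℓ.le hH hq hi hit hpq hqr hmid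
    have hlt := hK.right_lt_left_add_two hs hH hi hit
    have captured {h : ℤ} (h₁ : q.1 ≤ h) (h₂ : h + (2 * ℓ + 1) ≤ q.2) :
        ∃ p ∈ K, p.1 ≤ h ∧ h + (2 * ℓ + 1) ≤ p.2 := by
      obtain ⟨p, hp, hp₁, -, hp₂⟩ := hw ⟨q, Finset.mem_insert_self .., h₁, by simp only; omega, h₂⟩
      exact ⟨p, hp, hp₁, hp₂⟩
    constructor
    · obtain ⟨p, hp, hp₁, hp₂⟩ := captured (h := b i - 2 * ℓ) (by omega) (by omega)
      have := hs.left_le_of_right_lt hp (i := i) (by omega) (by omega)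
      omega
    · obtain ⟨p, hp, hp₁, hp₂⟩ := captured (h := a (i + 2) - 1) (by omega) (by omega)
      have := hs.right_le_of_left_lt hp (i := i + 1) (by omega) (by omega)
        (by change p.1 < a (i + 2); omega)
      omega
  · omega

lemma left_add_le_left (hℓ : 0 < ℓ) (hn : 4 * ℓ ≤ n) (hH : Powerful (4 * ℓ) n H) {i j : ℕ}
    (hi : 1 ≤ i) (hij : i < j) (hj : j ≤ t) (hne : ¬(i = 1 ∧ j = 2)) : a i + ℓ ≤ a j := by
  obtain ⟨k, rfl⟩ : ∃ k, j = k + 2 := ⟨j - 2, by omega⟩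
  have hmono := (hs.le_of_le hi (by omega : i ≤ k + 1) (by omega)).1
  have hlink := hs.left_succ_add_le_right hK.powerful (by omega) (by omega : 1 ≤ k) (by omega)
  have hgap := hK.right_lt_left_add_two hs hH (by omega : 1 ≤ k) hj
  rcases le_or_gt (a (k + 2)) (b k) with hcross | hcross
  · have := (hK.add_two_mul_le_of_crossing hs hℓ hn hH (by omega) hj hcross).1
    omega
  · omega

lemma right_add_le_right (hℓ : 0 < ℓ) (hn : 4 * ℓ ≤ n) (hH : Powerful (4 * ℓ) n H) {i j : ℕ}
    (hi : 1 ≤ i) (hij : i < j) (hj : j ≤ t) (hne : ¬(i = t - 1 ∧ j = t)) : b i + ℓ ≤ b j := by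
  have hit : i + 2 ≤ t := by omega
  have hmono := (hs.le_of_le (by omega) (by omega : i + 1 ≤ j) hj).2
  have hlink := hs.left_add_le_right hK.powerful hℓ.le (by omega) (by omega) hit
    (by omega : 1 ≤ i + 1) (by omega) le_rfl
  have hgap := hK.right_lt_left_add_two hs hH hi hit
  rcases le_or_gt (a (i + 2)) (b i) with hcross | hcross
  · have := (hK.add_two_mul_le_of_crossing hs hℓ hn hH hi hit hcross).2
    omega
  · omega

lemma right_add_le_left (hℓ : 0 < ℓ) (hn : 4 * ℓ ≤ n) (hH : Powerful (4 * ℓ) n H) {i j : ℕ}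
    (hi : 1 ≤ i) (hij : i + 3 ≤ j) (hj : j ≤ t) : b i + ℓ ≤ a j :=
  (hK.right_add_le_left_add_three hs hℓ hn hH hi (hij.trans hj)).trans
    (hs.le_of_le (by omega) hij hj).1

end IsOptimal

end Optimal

theorem stmt_4 (ℓ n : ℤ) (h0 : 0 < 4 * ℓ) (hn : 4 * ℓ ≤ n) (H : Finset (ℤ × ℤ))
    (hpow : Powerful (4 * ℓ) n H) :
    ∃ H' ⊆ H, Powerful ℓ n H' ∧
      ∃ (t : ℕ) (a b : ℕ → ℤ), StdForm H' t a b ∧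
        a 1 = 0 ∧ b t = n ∧
        -- the interleaving order: a_i < b_{i-1} for 2 ≤ i ≤ t, and b_i < a_{i+3}
        (∀ i : ℕ, 2 ≤ i → i ≤ t → a i < b (i - 1)) ∧
        (∀ i : ℕ, 1 ≤ i → i + 3 ≤ t → b i < a (i + 3)) ∧
        -- every two of the numbers differ by at least ℓ, with the listed exceptions
        (∀ i j : ℕ, 1 ≤ i → i < j → j ≤ t → ¬(i = 1 ∧ j = 2) → ℓ ≤ a j - a i) ∧
        (∀ i j : ℕ, 1 ≤ i → i < j → j ≤ t → ¬(i = t - 1 ∧ j = t) → ℓ ≤ b j - b i) ∧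
        (∀ i j : ℕ, 1 ≤ i → i ≤ t → 1 ≤ j → j ≤ t → i ≠ j + 2 → ℓ ≤ |a i - b j|) := by
  have hℓ : 0 < ℓ := by omega
  obtain ⟨K, hK⟩ := exists_isOptimal (hpow.mono (ℓ := ℓ + 1) (by omega) (by omega) hn)
  obtain ⟨t, a, b, hs⟩ := exists_stdForm_of_antichain (hK.antichain hpow)
  have hP : Powerful (ℓ + 1) n K := hK.powerful
  have hPn : ℓ + 1 ≤ n := by omega
  refine ⟨K, hK.subset, hP.mono hℓ.le (by omega) hPn, t, a, b, hs, hs.left_one_eq hP hPn,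
    hs.right_last_eq hP (by omega) hPn, ?_, ?_, ?_, ?_, ?_⟩
  · intro i hi hit
    have := hs.left_add_le_right hP hℓ.le hPn (by omega) hit (by omega : 1 ≤ i - 1) (by omega)
      (by omega)
    omega
  · intro i hi hit
    have := hK.right_add_le_left hs hℓ hn hpow hi le_rfl hit
    omega
  · intro i j hi hij hj hne
    exact le_sub_iff_add_le'.2 (hK.left_add_le_left hs hℓ hn hpow hi hij hj hne)
  · intro i j hi hij hj hne
    exact le_sub_iff_add_le'.2 (hK.right_add_le_right hs hℓ hn hpow hi hij hj hne)
  · intro i j hi hit hj hjt hne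
    rcases (by omega : i ≤ j + 1 ∨ j + 3 ≤ i) with hij | hji
    · exact le_abs'.2 (.inl (by have := hs.left_add_le_right hP hℓ.le hPn hi hit hj hjt hij; omega))
    · exact le_abs'.2 (.inr (le_sub_iff_add_le'.2 (hK.right_add_le_left hs hℓ hn hpow hj hji hit)))
end

section
/- For every integer ℓ > 0 there exists a graph G with maximum degree at most 3 and sets S, T ⊆ V(G) such that: (1) there do not exist three paths between S and T that are pairwise at distance at least 3 in G; and (2) for every set X ⊆ V(G) with |X| ≤ 2, there is a path between S and T all of whose vertices are at distance greater than ℓ from every member of X. -/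
/-- The distance in `G` between vertex sets `A` and `B` is at least `d`:
every walk from `A` to `B` has length at least `d`. -/
def SetDistGE {V : Type} (G : SimpleGraph V) (A B : Set V) (d : ℕ) : Prop :=
  ∀ ⦃x y : V⦄, x ∈ A → y ∈ B → ∀ w : G.Walk x y, d ≤ w.length

/-- The distance in `G` between `x` and `y` is at most `ℓ`. -/
def DistLE {V : Type} (G : SimpleGraph V) (x y : V) (ℓ : ℕ) : Prop :=
  ∃ w : G.Walk x y, w.length ≤ ℓ

/-- `P` is the vertex set of a path of `G` with one end in `S` and one end in `T`. -/
def IsSTPath {V : Type} (G : SimpleGraph V) (S T : Set V) (P : Set V) : Prop :=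
  ∃ (u v : V) (w : G.Walk u v), w.IsPath ∧ u ∈ S ∧ v ∈ T ∧ P = {x | x ∈ w.support}

/-- There are `k` paths between `S` and `T`, pairwise at distance at least `d`. -/
def HasKPaths {V : Type} (G : SimpleGraph V) (S T : Set V) (k d : ℕ) : Prop :=
  ∃ P : Fin k → Set V, (∀ i, IsSTPath G S T (P i)) ∧
    ∀ i j, i ≠ j → SetDistGE G (P i) (P j) d

/-- There is a set `X` of at most `m` vertices such that every path between `S` and `T`
contains a vertex with distance at most `ℓ` from some member of `X`. -/
def CoarseSeparator {V : Type} (G : SimpleGraph V) (S T : Set V) (m ℓ : ℕ) : Prop :=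
  ∃ X : Finset V, X.card ≤ m ∧
    ∀ (u v : V) (w : G.Walk u v), w.IsPath → u ∈ S → v ∈ T →
      ∃ y ∈ w.support, ∃ x ∈ X, DistLE G x y ℓ

/-!
A long horizontal row carries the leaves of a binary tree: the `i`-th leaf is joined by two long
legs to the places `2 i` and `2 i + 3` of the row, so that only consecutive leaves bridge
overlapping intervals. The terminal sets are the two ends of the row, with the root of the tree
added to both.

Two vertices cannot separate them coarsely. One of them has to be close to the root, hence far from
the leaves; the other one blocks only a short part of the row, around which some leaf leads.

Of three paths that are pairwise far apart, at most one contains the root, so it is enough to show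
that two paths `A` and `B` along the row at distance at least three cannot both avoid the root. By
induction on the height, every node is used by `A` or `B` as soon as the used part of the tree
splits at a place below this node. For suppose that it is not used. Then the used part of the tree
splits also at the middle below this node, and by induction so are all nodes on the two branches
from there to the children of the node. In the row, one of the two paths has to take the last leaf
before the middle, and the other one the first leaf behind it. As adjacent nodes cannot belong to
different paths, each branch lies in one of the paths, and the two children, which have a common
neighbour, belong to different paths.
-/

namespace CoarseMenger

theorem le_add_length_of_adj {V : Type*} {G : SimpleGraph V} {x y : V} {f : V → ℕ}
    (hf : ∀ a b, G.Adj a b → f b ≤ f a + 1) (w : G.Walk x y) : f y ≤ f x + w.length := by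
  induction w with
  | nil => simp
  | cons hadj w ih =>
    have hstep := hf _ _ hadj
    rw [SimpleGraph.Walk.length_cons]
    omega

end CoarseMenger

section

variable {V : Type} {G : SimpleGraph V} {A B P S T : Set V} {x y z : V} {d ℓ : ℕ}

theorem SetDistGE.symm (h : SetDistGE G A B d) : SetDistGE G B A d :=
  fun _ _ hx hy w ↦ by simpa using h hy hx w.reverse

theorem SetDistGE.disjoint (h : SetDistGE G A B d) (hd : 1 ≤ d) : Disjoint A B :=
  Set.disjoint_left.2 fun _ hA hB ↦ absurd (hd.trans (h hA hB .nil)) (by simp)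

theorem SetDistGE.not_adj (h : SetDistGE G A B d) (hd : 2 ≤ d) (hx : x ∈ A) (hy : y ∈ B) :
    ¬ G.Adj x y :=
  fun hxy ↦ absurd (hd.trans (h hx hy hxy.toWalk)) (by simp)

theorem SetDistGE.not_adj_of_adj (h : SetDistGE G A B d) (hd : 3 ≤ d) (hx : x ∈ A)
    (hy : y ∈ B) (hxz : G.Adj x z) : ¬ G.Adj y z :=
  fun hyz ↦ absurd (hd.trans (h hx hy (.cons hxz hyz.symm.toWalk))) (by simp)

theorem DistLE.symm (h : DistLE G x y ℓ) : DistLE G y x ℓ :=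
  h.imp' SimpleGraph.Walk.reverse fun w hw ↦ by simpa using hw

theorem DistLE.le_add (h : DistLE G x y ℓ) {f : V → ℕ}
    (hf : ∀ a b, G.Adj a b → f b ≤ f a + 1) : f y ≤ f x + ℓ := by
  obtain ⟨w, hw⟩ := h
  exact (CoarseMenger.le_add_length_of_adj hf w).trans (by omega)

theorem IsSTPath.of_insert (hP : IsSTPath G (insert x S) (insert x T) P) (hx : x ∉ P) :
    IsSTPath G S T P := by
  obtain ⟨u, v, w, hw, hu, hv, rfl⟩ := hP
  refine ⟨u, v, w, hw, hu.resolve_left ?_, hv.resolve_left ?_, rfl⟩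
  · rintro rfl
    exact hx w.start_mem_support
  · rintro rfl
    exact hx w.end_mem_support

theorem IsSTPath.exists_adj_of_cut (hP : IsSTPath G S T P) {W : Set V} (hS : S ⊆ W)
    (hT : Disjoint T W) : ∃ a ∈ P, ∃ b ∈ P, G.Adj a b ∧ a ∈ W ∧ b ∉ W := by
  obtain ⟨u, v, w, -, hu, hv, rfl⟩ := hP
  obtain ⟨e, he, hfst, hsnd⟩ := w.exists_boundary_dart W (hS hu) (hT.notMem_of_mem_left hv)
  exact ⟨e.fst, w.dart_fst_mem_support_of_mem_darts he, e.snd,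
    w.dart_snd_mem_support_of_mem_darts he, e.adj, hfst, hsnd⟩

end

namespace CoarseMenger

section

variable {V : Type*} {G : SimpleGraph V} {A : Set V}

theorem finite_and_ncard_le_three_of_subset {a b c : V} (h : A ⊆ {a, b, c}) :
    A.Finite ∧ A.ncard ≤ 3 := by
  classical
  have hfin : ({a, b, c} : Set V).Finite := Set.toFinite _
  refine ⟨hfin.subset h, (Set.ncard_le_ncard h hfin).trans ?_⟩
  simpa [← Set.ncard_coe_finset] using Finset.card_le_three (a := a) (b := b) (c := c)

theorem reachable_induce_of_adj_succ {f : ℕ → V} {m n : ℕ} (hmn : m ≤ n)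
    (hadj : ∀ i ∈ Set.Ico m n, G.Adj (f i) (f (i + 1))) (hf : ∀ i ∈ Set.Icc m n, f i ∈ A) :
    (G.induce A).Reachable ⟨f m, hf m ⟨le_rfl, hmn⟩⟩ ⟨f n, hf n ⟨hmn, le_rfl⟩⟩ := by
  induction n, hmn using Nat.le_induction with
  | base => rfl
  | succ n hmn ih =>
    refine (ih (fun i hi ↦ hadj i ⟨hi.1, hi.2.trans n.lt_succ_self⟩)
      fun i hi ↦ hf i ⟨hi.1, hi.2.trans n.le_succ⟩).trans (SimpleGraph.Adj.reachable ?_)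
    exact hadj n ⟨hmn, n.lt_succ_self⟩

theorem exists_isPath_of_reachable_induce {u v : A} (h : (G.induce A).Reachable u v) :
    ∃ w : G.Walk u v, w.IsPath ∧ ∀ a ∈ w.support, a ∈ A := by
  obtain ⟨w, hw⟩ := h.exists_isPath
  have hsupport : ∀ a ∈ (w.map (SimpleGraph.Embedding.induce A).toHom).support, a ∈ A := by
    intro a ha
    rw [SimpleGraph.Walk.support_map, List.mem_map] at ha
    obtain ⟨b, -, rfl⟩ := ha
    exact b.2
  exact ⟨_, hw.map Subtype.val_injective, hsupport⟩

end

/-- The vertices of the counterexample: `row p` is the `p`-th vertex of a one-way infinite path,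
`node k j` the `j`-th vertex at height `k` of an infinite binary tree, whose leaves are the
`node 0 i`, and `leg b i t` the `t`-th inner vertex, counted from the row, of one of the two paths
that join the `i`-th leaf to the row: the left one for `b = false`, the right one for `b = true`.
Row and tree are infinite; the choice of the terminals and of a root `node h 0` singles out the
first `2 ^ h` leaves. -/
inductive Vertex : Type
  | row : ℕ → Vertex
  | leg : Bool → ℕ → ℕ → Vertex
  | node : ℕ → ℕ → Vertex

open Vertex

/-- The place on the row where the leg `b` of the `i`-th leaf is attached. In units of `K`, the
`i`-th leaf bridges the interval from `2 * i` to `2 * i + 3`, so that only consecutive leaves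
bridge overlapping intervals. -/
def foot (K : ℕ) : Bool → ℕ → ℕ
  | false, i => 2 * i * K
  | true, i => (2 * i + 3) * K

/-- The edges of the counterexample, each in one of its two directions. -/
inductive Edge (K M : ℕ) : Vertex → Vertex → Prop
  | row (p : ℕ) : Edge K M (row p) (row (p + 1))
  | foot (b : Bool) (i : ℕ) : Edge K M (row (foot K b i)) (leg b i 0)
  | leg (b : Bool) (i t : ℕ) (ht : t < M) : Edge K M (leg b i t) (leg b i (t + 1))
  | leaf (b : Bool) (i : ℕ) : Edge K M (leg b i M) (node 0 i)
  | tree (k j : ℕ) : Edge K M (node k j) (node (k + 1) (j / 2))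

/-- The graph of the counterexample, with feet at the multiples of `K` and legs with `M + 1` inner
vertices. -/
def graph (K M : ℕ) : SimpleGraph Vertex := SimpleGraph.fromRel (Edge K M)

/-- The left end of the row. -/
def leftEnd (K : ℕ) : Set Vertex := row '' Set.Iic K

/-- The part of the row beyond the left feet of the first `2 ^ h` leaves. -/
def rightEnd (K h : ℕ) : Set Vertex := row '' Set.Ici (2 * 2 ^ h * K)

variable {K M h : ℕ}

theorem graph_adj {a b : Vertex} : (graph K M).Adj a b ↔ Edge K M a b ∨ Edge K M b a := by
  have hne (hab : Edge K M a b ∨ Edge K M b a) : a ≠ b := by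
    rintro rfl
    rcases hab with e | e <;> cases e
  rw [graph, SimpleGraph.fromRel_adj, and_iff_right_of_imp hne]

theorem Edge.adj {a b : Vertex} (e : Edge K M a b) : (graph K M).Adj a b :=
  graph_adj.2 (.inl e)

section Degree

theorem foot_injective (hK : 0 < K) {b b' : Bool} {i i' : ℕ} (hfoot : foot K b i = foot K b' i') :
    b = b' ∧ i = i' := by
  cases b <;> cases b' <;>
    simp only [foot, Nat.mul_left_inj hK.ne', true_and, reduceCtorEq, false_and] at hfoot ⊢ <;>
    omega

theorem exists_neighborSet_row_subset (hK : 0 < K) (M p : ℕ) :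
    ∃ x, (graph K M).neighborSet (row p) ⊆ {row (p - 1), row (p + 1), x} := by
  obtain ⟨x, hx⟩ : ∃ x, ∀ b i, foot K b i = p → leg b i 0 = x := by
    by_cases hp : ∃ b i, foot K b i = p
    · obtain ⟨b, i, rfl⟩ := hp
      refine ⟨leg b i 0, fun b' i' hfoot ↦ ?_⟩
      obtain ⟨rfl, rfl⟩ := foot_injective hK hfoot
      rfl
    · push Not at hp
      exact ⟨row p, fun b i hfoot ↦ absurd hfoot (hp b i)⟩
  refine ⟨x, fun y hy ↦ ?_⟩
  rw [SimpleGraph.mem_neighborSet, graph_adj] at hy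
  generalize hz : row p = z at hy
  rcases hy with e | e <;> cases e <;> cases hz
  · simp
  · exact .inr (.inr (hx _ _ rfl))
  · simp

theorem neighborSet_leg_subset (K M : ℕ) (b : Bool) (i t : ℕ) :
    (graph K M).neighborSet (leg b i t) ⊆
      {if t = 0 then row (foot K b i) else leg b i (t - 1),
        if t = M then node 0 i else leg b i (t + 1)} := by
  intro y hy
  rw [SimpleGraph.mem_neighborSet, graph_adj] at hy
  rcases hy with e | e <;> cases e
  case inl.leg ht => simp [ht.ne]
  all_goals simp

theorem neighborSet_node_zero_subset (K M j : ℕ) :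
    (graph K M).neighborSet (node 0 j) ⊆ {leg false j M, leg true j M, node 1 (j / 2)} := by
  intro y hy
  rw [SimpleGraph.mem_neighborSet, graph_adj] at hy
  rcases hy with e | e <;> cases e
  case inr.leaf b => cases b <;> simp
  case inl.tree => simp

theorem neighborSet_node_succ_subset (K M k j : ℕ) :
    (graph K M).neighborSet (node (k + 1) j) ⊆
      {node k (2 * j), node k (2 * j + 1), node (k + 2) (j / 2)} := by
  intro y hy
  rw [SimpleGraph.mem_neighborSet, graph_adj] at hy
  rcases hy with e | e <;> cases e
  case inl.tree => simp
  case inr.tree i =>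
    have hparity : i = 2 * (i / 2) ∨ i = 2 * (i / 2) + 1 := by omega
    simp [hparity]

theorem degree_le_three (hK : 0 < K) (M : ℕ) (v : Vertex) :
    ((graph K M).neighborSet v).Finite ∧ ((graph K M).neighborSet v).ncard ≤ 3 := by
  match v with
  | row p =>
    obtain ⟨x, hx⟩ := exists_neighborSet_row_subset hK M p
    exact finite_and_ncard_le_three_of_subset hx
  | leg b i t =>
    exact finite_and_ncard_le_three_of_subset
      ((neighborSet_leg_subset K M b i t).trans (Set.subset_insert (leg b i t) _))
  | node 0 j => exact finite_and_ncard_le_three_of_subset (neighborSet_node_zero_subset K M j)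
  | node (k + 1) j =>
    exact finite_and_ncard_le_three_of_subset (neighborSet_node_succ_subset K M k j)

end Degree

section TwoPaths

/-- The vertices on the left of a cut through the tree, the legs and the row: those of the row up
to `row p`, the legs in `L`, and the nodes in `c`. -/
def leftSide (p : ℕ) (L : Bool → ℕ → Prop) (c : ℕ → ℕ → Prop) : Set Vertex
  | row q => q ≤ p
  | leg b i _ => L b i
  | node k j => c k j

/-- No tree path inside `U` joins one of the first `q` leaves to a later leaf: the nodes can be
coloured so that exactly the leaves in front of `q` have the colour `True`, and no tree edge inside
`U` has ends of different colours. -/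
def Splits (U : Set Vertex) (q : ℕ) : Prop :=
  ∃ c : ℕ → ℕ → Prop,
    (∀ k j, node k j ∈ U → node (k + 1) (j / 2) ∈ U → (c k j ↔ c (k + 1) (j / 2))) ∧
    ∀ i, c 0 i ↔ i < q

variable {A B C U W : Set Vertex} {p q r j k : ℕ}

theorem Splits.mono (hUW : U ⊆ W) (h : Splits W q) : Splits U q := by
  obtain ⟨c, hc, hleaf⟩ := h
  exact ⟨c, fun k j hk hk' ↦ hc k j (hUW hk) (hUW hk'), hleaf⟩

theorem splits_zero (U : Set Vertex) : Splits U 0 :=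
  ⟨fun _ _ ↦ False, by simp, by simp⟩

/-- Recolour the part of the tree below the missing node: its left half `True`, its right half
`False`. -/
theorem Splits.of_notMem (h : Splits U q) (hjq : j * 2 ^ (k + 1) ≤ q)
    (hqj : q ≤ (j + 1) * 2 ^ (k + 1)) (hU : node (k + 1) j ∉ U) :
    Splits U ((2 * j + 1) * 2 ^ k) := by
  obtain ⟨c, hc, hleaf⟩ := h
  have hparent (a n : ℕ) (hn : n < k) : a / 2 / 2 ^ (k - (n + 1)) = a / 2 ^ (k - n) := by
    rw [Nat.div_div_eq_div_mul, ← pow_succ', show k - (n + 1) + 1 = k - n by omega]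
  refine ⟨fun n a ↦ (n ≤ k ∧ a / 2 ^ (k - n) = 2 * j) ∨
    (¬ (n ≤ k ∧ a / 2 ^ (k - n) / 2 = j) ∧ c n a), fun n a hn hn' ↦ ?_, fun i ↦ ?_⟩
  · rcases lt_trichotomy n k with hnk | rfl | hnk
    · simp only [hparent a n hnk, hc n a hn hn', hnk.le, Nat.succ_le_iff.2 hnk, true_and]
    · have haj : a / 2 ≠ j := by
        rintro rfl
        exact hU hn'
      have haj' : a ≠ 2 * j := by omega
      simp [haj, haj', hc n a hn hn']
    · simp only [hnk.not_ge, (hnk.trans n.lt_succ_self).not_ge, hc n a hn hn', false_and,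
        not_false_eq_true, true_and, false_or]
  · have hpos : 0 < 2 ^ k := by positivity
    have hlt : i < (2 * j + 1) * 2 ^ k ↔ i / 2 ^ k < 2 * j + 1 :=
      (Nat.div_lt_iff_lt_mul hpos).symm
    have hlow : i / 2 ^ k < 2 * j → i < q := fun hi ↦ by
      rw [Nat.div_lt_iff_lt_mul hpos] at hi
      rw [pow_succ] at hjq
      linarith
    have hhigh : i < q → i / 2 ^ k < 2 * (j + 1) := fun hi ↦ by
      rw [Nat.div_lt_iff_lt_mul hpos]
      rw [pow_succ] at hqj
      linarith
    rw [hlt]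
    simp only [hleaf, Nat.zero_le, Nat.sub_zero, true_and]
    omega

theorem foot_le_iff (hK : 0 < K) {b : Bool} {i : ℕ} :
    foot K b i ≤ (2 * q + 1) * K ↔ i < q ∨ (b = false ∧ i = q) := by
  cases b <;>
    simp only [foot, Nat.mul_le_mul_right_iff hK, true_and, reduceCtorEq, false_and, or_false] <;>
    omega

theorem mem_of_cut (hC : IsSTPath (graph K M) (leftEnd K) (rightEnd K h) C) (hp : K ≤ p)
    (hp' : p < 2 * 2 ^ h * K) (L : Bool → ℕ → Prop) {c : ℕ → ℕ → Prop}
    (hc : ∀ k j, node k j ∈ C → node (k + 1) (j / 2) ∈ C → (c k j ↔ c (k + 1) (j / 2))) :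
    row p ∈ C ∨ (∃ b i, row (foot K b i) ∈ C ∧ ¬ (foot K b i ≤ p ↔ L b i)) ∨
      ∃ b i, node 0 i ∈ C ∧ ¬ (L b i ↔ c 0 i) := by
  have hS : leftEnd K ⊆ leftSide p L c := by
    rintro _ ⟨a, ha, rfl⟩
    exact le_trans ha hp
  have hT : Disjoint (rightEnd K h) (leftSide p L c) := by
    rw [Set.disjoint_left]
    rintro _ ⟨a, ha, rfl⟩ ha'
    exact absurd (hp'.trans_le ha) ha'.not_gt
  obtain ⟨x, y, hx, hy, e, hxy⟩ : ∃ x y, x ∈ C ∧ y ∈ C ∧ Edge K M x y ∧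
      ¬ (x ∈ leftSide p L c ↔ y ∈ leftSide p L c) := by
    obtain ⟨x, hx, y, hy, hxy, hxW, hyW⟩ := hC.exists_adj_of_cut hS hT
    rcases graph_adj.1 hxy with e | e
    · exact ⟨x, y, hx, hy, e, fun h ↦ hyW (h.1 hxW)⟩
    · exact ⟨y, x, hy, hx, e, fun h ↦ hyW (h.2 hxW)⟩
  cases e with
  | row a =>
    have hap : ¬ (a ≤ p ↔ a + 1 ≤ p) := hxy
    obtain rfl : a = p := by omega
    exact .inl hx
  | foot b i => exact .inr (.inl ⟨b, i, hx, hxy⟩)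
  | leg => exact absurd Iff.rfl hxy
  | leaf b i => exact .inr (.inr ⟨b, i, hy, hxy⟩)
  | tree k j => exact absurd (hc k j hx hy) hxy

/-- A path that avoids the place `(2 * q + 1) * K` of the row crosses the cut that puts each leg on
the side of its leaf, and also the cut that puts each leg on the side of its foot. Only the `q`-th
leaf bridges that place, so both times this happens at the leg `b` of the `q`-th leaf. -/
theorem row_mem_or_leaf_mem (hK : 0 < K)
    (hC : IsSTPath (graph K M) (leftEnd K) (rightEnd K h) C) (hq : q < 2 ^ h) (b : Bool)
    (hsplit : Splits C (q + b.toNat)) :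
    row ((2 * q + 1) * K) ∈ C ∨ (row (foot K b q) ∈ C ∧ node 0 q ∈ C) := by
  obtain ⟨c, hc, hleaf⟩ := hsplit
  have hp : K ≤ (2 * q + 1) * K := Nat.le_mul_of_pos_left K (by omega)
  have hp' : (2 * q + 1) * K < 2 * 2 ^ h * K := Nat.mul_lt_mul_of_pos_right (by omega) hK
  have hexc {b' : Bool} {i : ℕ} (hne : ¬ (foot K b' i ≤ (2 * q + 1) * K ↔ c 0 i)) :
      b' = b ∧ i = q := by
    rw [foot_le_iff hK, hleaf] at hne
    cases b <;> cases b' <;>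
      simp only [Bool.toNat_true, Bool.toNat_false, true_and, reduceCtorEq, false_and, or_false]
        at hne ⊢ <;>
      omega
  have hleafSide : row ((2 * q + 1) * K) ∈ C ∨ row (foot K b q) ∈ C := by
    rcases mem_of_cut hC hp hp' (fun _ i ↦ c 0 i) hc with hrow | ⟨b', i, hfoot, hne⟩ | hnode
    · exact .inl hrow
    · obtain ⟨rfl, rfl⟩ := hexc hne
      exact .inr hfoot
    · simp at hnode
  have hfootSide : row ((2 * q + 1) * K) ∈ C ∨ node 0 q ∈ C := by
    rcases mem_of_cut hC hp hp' (fun b i ↦ foot K b i ≤ (2 * q + 1) * K) hc with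
      hrow | hfoot | ⟨b', i, hnode, hne⟩
    · exact .inl hrow
    · simp at hfoot
    · exact .inr ((hexc hne).2 ▸ hnode)
  tauto

theorem leaf_mem_of_splits (hK : 0 < K)
    (hA : IsSTPath (graph K M) (leftEnd K) (rightEnd K h) A)
    (hB : IsSTPath (graph K M) (leftEnd K) (rightEnd K h) B) (hAB : Disjoint A B) (hq : q < 2 ^ h)
    (b : Bool) (hsplit : Splits (A ∪ B) (q + b.toNat)) : node 0 q ∈ A ∪ B := by
  rcases row_mem_or_leaf_mem hK hA hq b (hsplit.mono Set.subset_union_left) with hrowA | ⟨-, hA⟩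
  · rcases row_mem_or_leaf_mem hK hB hq b (hsplit.mono Set.subset_union_right) with
      hrowB | ⟨-, hB⟩
    · exact absurd hrowB (hAB.notMem_of_mem_left hrowA)
    · exact .inr hB
  · exact .inl hA

/-- The right leg of the `r`-th leaf ends at the place of the row that only the next leaf bridges,
so the path that takes the `r`-th leaf leaves only the next leaf to the other path. -/
theorem consecutive_leaves_mem_of_splits (hK : 0 < K)
    (hA : IsSTPath (graph K M) (leftEnd K) (rightEnd K h) A)
    (hB : IsSTPath (graph K M) (leftEnd K) (rightEnd K h) B) (hAB : Disjoint A B)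
    (hr : r + 1 < 2 ^ h) (hsplit : Splits (A ∪ B) (r + 1)) :
    (node 0 r ∈ A ∧ node 0 (r + 1) ∈ B) ∨ (node 0 r ∈ B ∧ node 0 (r + 1) ∈ A) := by
  have hsplitA := hsplit.mono Set.subset_union_left
  have hsplitB := hsplit.mono Set.subset_union_right
  have hnext : foot K true r = (2 * (r + 1) + 1) * K := rfl
  have hr' : r < 2 ^ h := by omega
  have hleftA := row_mem_or_leaf_mem hK hA hr' true hsplitA
  have hleftB := row_mem_or_leaf_mem hK hB hr' true hsplitB
  have hrightA := row_mem_or_leaf_mem hK hA hr false hsplitA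
  have hrightB := row_mem_or_leaf_mem hK hB hr false hsplitB
  rw [hnext] at hleftA hleftB
  have hdisj := Set.disjoint_left.1 hAB
  have hplace := @hdisj (row ((2 * r + 1) * K))
  have hfoot := @hdisj (row ((2 * (r + 1) + 1) * K))
  tauto

theorem ancestor_mem_of_leaf_mem (hAB : ∀ ⦃x y⦄, x ∈ A → y ∈ B → ¬ (graph K M).Adj x y)
    (hbranch : ∀ i ≤ k, node i (r / 2 ^ i) ∈ A ∪ B) (hleaf : node 0 r ∈ A) :
    node k (r / 2 ^ k) ∈ A := by
  induction k with
  | zero => simpa using hleaf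
  | succ k ih =>
    have hadj : (graph K M).Adj (node k (r / 2 ^ k)) (node (k + 1) (r / 2 ^ (k + 1))) := by
      rw [pow_succ, ← Nat.div_div_eq_div_mul]
      exact (Edge.tree k _).adj
    have hmem := ih fun i hi ↦ hbranch i (hi.trans k.le_succ)
    exact (hbranch (k + 1) le_rfl).resolve_right fun hB ↦ hAB hmem hB hadj

theorem not_leaves_mem_of_branches_mem (hAB : SetDistGE (graph K M) A B 3)
    (hr : r + 1 = (2 * j + 1) * 2 ^ k)
    (hleft : ∀ i ≤ k, node i (r / 2 ^ i) ∈ A ∪ B)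
    (hright : ∀ i ≤ k, node i ((r + 1) / 2 ^ i) ∈ A ∪ B) :
    ¬ (node 0 r ∈ A ∧ node 0 (r + 1) ∈ B) := by
  rintro ⟨hleafA, hleafB⟩
  have hpos : 0 < 2 ^ k := by positivity
  have hr' : r / 2 ^ k = 2 * j := by
    rw [add_mul, one_mul] at hr
    exact Nat.div_eq_of_lt_le (by omega) (by rw [add_mul, one_mul]; omega)
  have hA : node k (2 * j) ∈ A := hr' ▸ ancestor_mem_of_leaf_mem
    (fun _ _ ↦ hAB.not_adj (by norm_num)) hleft hleafA
  have hB : node k (2 * j + 1) ∈ B := by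
    rw [← Nat.mul_div_cancel (2 * j + 1) hpos, ← hr]
    exact ancestor_mem_of_leaf_mem
      (fun _ _ ↦ hAB.symm.not_adj (by norm_num))
      (fun i hi ↦ Set.union_comm A B ▸ hright i hi) hleafB
  have hadjA : (graph K M).Adj (node k (2 * j)) (node (k + 1) j) := by
    simpa using (Edge.tree k (2 * j)).adj (K := K) (M := M)
  have hadjB : (graph K M).Adj (node k (2 * j + 1)) (node (k + 1) j) := by
    simpa [show (2 * j + 1) / 2 = j by omega] using (Edge.tree k (2 * j + 1)).adj (K := K) (M := M)
  exact hAB.not_adj_of_adj le_rfl hA hB hadjA hadjB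

theorem two_mul_add_one_mul_two_pow_lt (hk : k + 1 ≤ h) (hj : j * 2 ^ (k + 1) < 2 ^ h) :
    (2 * j + 1) * 2 ^ k < 2 ^ h := by
  obtain ⟨d, rfl⟩ := Nat.exists_eq_add_of_le hk
  rw [pow_add 2 (k + 1) d, mul_comm (2 ^ (k + 1)) (2 ^ d)] at hj ⊢
  have hjd : j < 2 ^ d := Nat.lt_of_mul_lt_mul_right hj
  rw [pow_succ', ← mul_assoc]
  exact Nat.mul_lt_mul_of_pos_right (by omega) (by positivity)

/-- By induction on the height: if the node is missing, then the two branches that lead to its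
children from the leaves on both sides of its middle lie in `A ∪ B`, and one of them lies in `A`,
the other one in `B`, so that `A` and `B` have distance at most two. -/
theorem node_mem_of_splits (hK : 0 < K)
    (hA : IsSTPath (graph K M) (leftEnd K) (rightEnd K h) A)
    (hB : IsSTPath (graph K M) (leftEnd K) (rightEnd K h) B)
    (hAB : SetDistGE (graph K M) A B 3) (hk : k ≤ h) (hj : j * 2 ^ k < 2 ^ h)
    (hjq : j * 2 ^ k ≤ q) (hqj : q ≤ (j + 1) * 2 ^ k) (hsplit : Splits (A ∪ B) q) :
    node k j ∈ A ∪ B := by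
  have hdisj := hAB.disjoint (by norm_num)
  induction k using Nat.strong_induction_on generalizing j q with
  | _ k ih =>
  rcases k with _ | k
  · rw [pow_zero, mul_one] at hj hjq hqj
    obtain rfl | rfl : q = j ∨ q = j + 1 := by omega
    · exact leaf_mem_of_splits hK hA hB hdisj hj false hsplit
    · exact leaf_mem_of_splits hK hA hB hdisj hj true hsplit
  by_contra hnode
  obtain ⟨r, hr⟩ : ∃ r, (2 * j + 1) * 2 ^ k = r + 1 :=
    Nat.exists_eq_succ_of_ne_zero (by positivity)
  have hrh : r + 1 < 2 ^ h := hr ▸ two_mul_add_one_mul_two_pow_lt hk hj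
  have hmid : Splits (A ∪ B) (r + 1) := hr ▸ hsplit.of_notMem hjq hqj hnode
  have hleft (i : ℕ) (hi : i ≤ k) : node i (r / 2 ^ i) ∈ A ∪ B := by
    have hle := Nat.div_mul_le_self r (2 ^ i)
    have hlt := Nat.lt_div_mul_add (a := r) (b := 2 ^ i) (by positivity)
    exact ih i (by omega) (by omega) (by omega) (by omega) (by rw [add_mul, one_mul]; omega) hmid
  have hright (i : ℕ) (hi : i ≤ k) : node i ((r + 1) / 2 ^ i) ∈ A ∪ B := by
    have hle := Nat.div_mul_le_self (r + 1) (2 ^ i)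
    have hlt := Nat.lt_div_mul_add (a := r + 1) (b := 2 ^ i) (by positivity)
    exact ih i (by omega) (by omega) (by omega) (by omega) (by rw [add_mul, one_mul]; omega) hmid
  rcases consecutive_leaves_mem_of_splits hK hA hB hdisj hrh hmid with hleaves | hleaves
  · exact not_leaves_mem_of_branches_mem hAB hr.symm hleft hright hleaves
  · rw [Set.union_comm] at hleft hright
    exact not_leaves_mem_of_branches_mem hAB.symm hr.symm hleft hright hleaves

theorem root_mem_of_setDistGE (hK : 0 < K)
    (hA : IsSTPath (graph K M) (leftEnd K) (rightEnd K h) A)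
    (hB : IsSTPath (graph K M) (leftEnd K) (rightEnd K h) B)
    (hAB : SetDistGE (graph K M) A B 3) : node h 0 ∈ A ∪ B :=
  node_mem_of_splits hK hA hB hAB le_rfl (by simp) (by simp) (Nat.zero_le _) (splits_zero _)

theorem not_hasKPaths (hK : 0 < K) (M h : ℕ) :
    ¬ HasKPaths (graph K M) (insert (node h 0) (leftEnd K)) (insert (node h 0) (rightEnd K h))
      3 3 := by
  rintro ⟨P, hP, hdist⟩
  have hroot (i j : Fin 3) (hij : i ≠ j) : node h 0 ∈ P i ∨ node h 0 ∈ P j := by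
    by_contra! hmem
    exact (root_mem_of_setDistGE hK ((hP i).of_insert hmem.1)
      ((hP j).of_insert hmem.2) (hdist i j hij)).elim hmem.1 hmem.2
  have hdisj (i j : Fin 3) (hij : i ≠ j) (hi : node h 0 ∈ P i) : node h 0 ∉ P j :=
    ((hdist i j hij).disjoint (by norm_num)).notMem_of_mem_left hi
  have h01 := hroot 0 1 (by decide)
  have h02 := hroot 0 2 (by decide)
  have h12 := hroot 1 2 (by decide)
  have d01 := hdisj 0 1 (by decide)
  have d02 := hdisj 0 2 (by decide)
  have d12 := hdisj 1 2 (by decide)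
  tauto

end TwoPaths

section Separators

/-- The vertices at distance greater than `ℓ` from every member of `X`. -/
def farFrom (K M ℓ : ℕ) (X : Finset Vertex) : Set Vertex :=
  {y | ∀ x ∈ X, ¬ DistLE (graph K M) x y ℓ}

/-- The height in the tree, extended by zero to the legs and the row. -/
def height : Vertex → ℕ
  | row _ => 0
  | leg _ _ _ => 0
  | node k _ => k

/-- The distance from `row c` along the row and up one leg, capped at `M + 1`. The truncated
differences add up to the distance on the row. -/
def rowDist (K M c : ℕ) : Vertex → ℕ
  | row p => min ((p - c) + (c - p)) (M + 1)
  | leg b i t => min ((foot K b i - c) + (c - foot K b i) + t + 1) (M + 1)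
  | node _ _ => M + 1

variable {ℓ c i p q : ℕ} {x y z : Vertex} {s : Set Vertex}

theorem height_le_of_adj (hxy : (graph K M).Adj x y) : height y ≤ height x + 1 := by
  rcases graph_adj.1 hxy with e | e <;> cases e <;> simp only [height] <;> omega

theorem rowDist_le_of_adj (c : ℕ) (hxy : (graph K M).Adj x y) :
    rowDist K M c y ≤ rowDist K M c x + 1 := by
  rcases graph_adj.1 hxy with e | e <;> cases e <;> simp only [rowDist] <;> omega

theorem row_reachable (hpq : p ≤ q) (hs : ∀ a ∈ Set.Icc p q, row a ∈ s) :
    ((graph K M).induce s).Reachable ⟨row p, hs p ⟨le_rfl, hpq⟩⟩ ⟨row q, hs q ⟨hpq, le_rfl⟩⟩ :=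
  reachable_induce_of_adj_succ hpq (fun a _ ↦ (Edge.row a).adj) hs

theorem foot_reachable_leaf {b : Bool} (hfoot : row (foot K b i) ∈ s)
    (hleg : ∀ t, leg b i t ∈ s) (hleaf : node 0 i ∈ s) :
    ((graph K M).induce s).Reachable ⟨row (foot K b i), hfoot⟩ ⟨node 0 i, hleaf⟩ := by
  have hstart : ((graph K M).induce s).Adj ⟨_, hfoot⟩ ⟨_, hleg 0⟩ := (Edge.foot b i).adj
  have hend : ((graph K M).induce s).Adj ⟨_, hleg M⟩ ⟨_, hleaf⟩ := (Edge.leaf b i).adj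
  have hmiddle := reachable_induce_of_adj_succ (G := graph K M) M.zero_le
    (fun t ht ↦ (Edge.leg b i t ht.2).adj) fun t _ ↦ hleg t
  exact (hstart.reachable.trans hmiddle).trans hend.reachable

theorem exists_leaf_bridging (hK : 4 * ℓ < K) (hc : K ≤ c) :
    ∃ i, foot K false i + 2 * ℓ < c ∧ c + 2 * ℓ < foot K true i := by
  have hle := Nat.div_mul_le_self (c - 2 * ℓ - 1) (2 * K)
  have hlt := Nat.lt_div_mul_add (a := c - 2 * ℓ - 1) (b := 2 * K) (by omega)
  refine ⟨(c - 2 * ℓ - 1) / (2 * K), ?_, ?_⟩ <;> simp only [foot] <;>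
    generalize (c - 2 * ℓ - 1) / (2 * K) = i at hle hlt ⊢
  · rw [show 2 * i * K = i * (2 * K) by ring]
    omega
  · rw [show (2 * i + 3) * K = i * (2 * K) + 2 * K + K by ring]
    omega

theorem exists_reachable_of_rowDist (hK : 4 * ℓ < K) (hM : 2 * ℓ ≤ M) (h : ℕ) (hc : K ≤ c)
    (hs : ∀ z, height z = 0 → 2 * ℓ < rowDist K M c z → z ∈ s) :
    ∃ u v : s, ↑u ∈ leftEnd K ∧ ↑v ∈ rightEnd K h ∧ ((graph K M).induce s).Reachable u v := by
  have hrow (p : ℕ) (hp : p + 2 * ℓ < c ∨ c + 2 * ℓ < p) : row p ∈ s :=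
    hs _ rfl (by simp only [rowDist]; omega)
  have hleg (b : Bool) (i t : ℕ) (hb : foot K b i + 2 * ℓ < c ∨ c + 2 * ℓ < foot K b i) :
      leg b i t ∈ s :=
    hs _ rfl (by simp only [rowDist]; omega)
  have hleaf (i : ℕ) : node 0 i ∈ s := hs _ rfl (by simp only [rowDist]; omega)
  obtain ⟨i, hil, hir⟩ := exists_leaf_bridging hK hc
  have hleft := row_reachable (K := K) (M := M) (min_le_right K (foot K false i))
    fun a ha ↦ hrow a (.inl (by have := ha.2; omega))
  have hright := row_reachable (K := K) (M := M) (le_max_right (2 * 2 ^ h * K) (foot K true i))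
    fun a ha ↦ hrow a (.inr (by have := ha.1; omega))
  have hup := foot_reachable_leaf (M := M) (hrow _ (.inl hil))
    (fun t ↦ hleg false i t (.inl hil)) (hleaf i)
  have hdown := (foot_reachable_leaf (M := M) (hrow _ (.inr hir))
    (fun t ↦ hleg true i t (.inr hir)) (hleaf i)).symm
  exact ⟨_, _, ⟨_, Set.mem_Iic.2 (min_le_left _ _), rfl⟩, ⟨_, Set.mem_Ici.2 (le_max_left _ _), rfl⟩,
    ((hleft.trans hup).trans hdown).trans hright⟩

theorem exists_reachable_of_not_distLE (hK : 4 * ℓ < K) (hM : 2 * ℓ ≤ M) (h : ℕ) (y : Vertex)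
    (hs : ∀ z, height z = 0 → ¬ DistLE (graph K M) y z ℓ → z ∈ s) :
    ∃ u v : s, ↑u ∈ leftEnd K ∧ ↑v ∈ rightEnd K h ∧ ((graph K M).induce s).Reachable u v := by
  by_cases hrow : ∀ p ∈ Set.Icc K (2 * 2 ^ h * K), ¬ DistLE (graph K M) y (row p) ℓ
  · have hle : K ≤ 2 * 2 ^ h * K := Nat.le_mul_of_pos_left K (by positivity)
    exact ⟨_, _, ⟨K, Set.self_mem_Iic, rfl⟩, ⟨_, Set.self_mem_Ici, rfl⟩,
      row_reachable hle fun p hp ↦ hs _ rfl (hrow p hp)⟩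
  push Not at hrow
  obtain ⟨c, ⟨hc, -⟩, hyc⟩ := hrow
  refine exists_reachable_of_rowDist hK hM h hc fun z hz hcz ↦ hs z hz fun hyz ↦ hcz.not_ge ?_
  have hzero : rowDist K M c (row c) = 0 := by simp [rowDist]
  have hyc' := hyc.symm.le_add fun _ _ ↦ rowDist_le_of_adj c
  have hyz' := hyz.le_add fun _ _ ↦ rowDist_le_of_adj c
  omega

/-- A vertex close to the root is far from the row, the legs and the leaves, which leaves one
vertex to avoid there: if it is close to the row, go around it by the legs of a leaf. -/
theorem exists_reachable_farFrom (hK : 4 * ℓ < K) (hM : 2 * ℓ ≤ M) (hh : 2 * ℓ < h)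
    {X : Finset Vertex} (hX : X.card ≤ 2) :
    ∃ u v : farFrom K M ℓ X, ↑u ∈ insert (node h 0) (leftEnd K) ∧
      ↑v ∈ insert (node h 0) (rightEnd K h) ∧
      ((graph K M).induce (farFrom K M ℓ X)).Reachable u v := by
  classical
  by_cases hroot : node h 0 ∈ farFrom K M ℓ X
  · exact ⟨⟨_, hroot⟩, ⟨_, hroot⟩, .inl rfl, .inl rfl, .rfl⟩
  obtain ⟨x, hx, hxroot⟩ : ∃ x ∈ X, DistLE (graph K M) x (node h 0) ℓ := by
    simpa [farFrom] using hroot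
  have hxfar (z : Vertex) (hz : height z = 0) : ¬ DistLE (graph K M) x z ℓ := fun hxz ↦ by
    have hup := hxroot.le_add fun _ _ ↦ height_le_of_adj
    have hdown := hxz.symm.le_add fun _ _ ↦ height_le_of_adj
    rw [show height (node h 0) = h from rfl] at hup
    omega
  have : Nonempty Vertex := ⟨x⟩
  obtain ⟨y, hy⟩ : ∃ y, X.erase x ⊆ {y} := by
    rw [← Finset.card_le_one_iff_subset_singleton, Finset.card_erase_of_mem hx]
    omega
  have hs (z : Vertex) (hz : height z = 0) (hyz : ¬ DistLE (graph K M) y z ℓ) :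
      z ∈ farFrom K M ℓ X := fun a ha ↦ by
    by_cases hax : a = x
    · exact hax ▸ hxfar z hz
    · rwa [Finset.mem_singleton.1 (hy (Finset.mem_erase.2 ⟨hax, ha⟩))]
  obtain ⟨u, v, hu, hv, huv⟩ := exists_reachable_of_not_distLE hK hM h y hs
  exact ⟨u, v, .inr hu, .inr hv, huv⟩

end Separators

end CoarseMenger

/-- Theorem 1.3: counterexample to the coarse Menger conjecture for `k = d = 3`,
with maximum degree at most 3. -/
theorem stmt_8 (ℓ : ℕ) (hl : 0 < ℓ) :
    ∃ (V : Type) (G : SimpleGraph V) (S T : Set V),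
      (∀ v : V, (G.neighborSet v).Finite ∧ (G.neighborSet v).ncard ≤ 3) ∧
      ¬ HasKPaths G S T 3 3 ∧
      ∀ X : Finset V, X.card ≤ 2 →
        ∃ (u v : V) (w : G.Walk u v), w.IsPath ∧ u ∈ S ∧ v ∈ T ∧
          ∀ x ∈ X, ∀ y ∈ w.support, ¬ DistLE G x y ℓ := by
  open CoarseMenger in
  have hK : 0 < 4 * ℓ + 1 := by omega
  refine ⟨Vertex, graph (4 * ℓ + 1) (2 * ℓ), _, _, degree_le_three hK _,
    not_hasKPaths hK _ (2 * ℓ + 1), fun X hX ↦ ?_⟩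
  obtain ⟨u, v, hu, hv, huv⟩ := exists_reachable_farFrom (4 * ℓ).lt_succ_self le_rfl
    (2 * ℓ).lt_succ_self hX
  obtain ⟨w, hw, hfar⟩ := exists_isPath_of_reachable_induce huv
  exact ⟨u, v, w, hw, hu, hv, fun x hx y hy ↦ hfar y hy x hx⟩
end

section
/- Let c ≥ 7 and ℓ ≥ 2c+5 be integers. For every non-null graph G and S,T ⊆ V(G), either there are two paths between S and T at distance at least three from each other, or there exists a vertex x ∈ V(G) such that every path between S and T contains a vertex at distance at most 8ℓ + c + 2 from x. In particular (taking c = 7, ℓ = 19), the bound 161 suffices. -/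
/-!
Let `P` be a shortest path from `S` to `T`, and call the components of the graph induced on the
vertices at distance more than `10` from `P` far components; such a component attaches to `P`
through shortest legs of length `11`. If no ball of radius `80 = 71 + 10 - 1` around a vertex of
`P` separates `S` from `T`, then for every index `i` there is a walk from `S` to `T` avoiding the
ball around `P i`. Such a walk cannot jump along `P` over that ball, so it crosses inside a far
component that reaches at least `71` beyond `i` on both sides, where meeting `S` or `T` counts as
reaching beyond the ends of `P`. A greedy choice extracts from these components a chain running
from `S` to `T` in which only components close together in the sequence overlap along `P`.

Two sets at distance `3` are then grown together along the chain: one, `D`, contains the current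
component `k`, and the other, a strand `D'`, stopped at an earlier component `k'` and can leave it
through its last leg to run on along `P`. If component `k + 1`, with its first leg, is far from `D`
and its last leg, then `D'` is continued along `P` into it, and the roles are exchanged. If not,
then it is joined to `D` directly, unless it comes near `D'` as well. In that case it is joined to
`D'` instead: `D'` was itself built parallel to a still earlier strand, ending at a component too
early in the chain to come near component `k + 1`, so that strand takes the place of `D'`.
-/

open SimpleGraph

namespace DistLE

variable {V : Type} {G : SimpleGraph V} {x y z : V} {k l : ℕ}

theorem refl (x : V) (k : ℕ) : DistLE G x x k := ⟨Walk.nil, Nat.zero_le k⟩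

theorem symm_s11 (h : DistLE G x y k) : DistLE G y x k :=
  let ⟨w, hw⟩ := h
  ⟨w.reverse, w.length_reverse.trans_le hw⟩

theorem trans (h : DistLE G x y k) (h' : DistLE G y z l) : DistLE G x z (k + l) :=
  let ⟨w, hw⟩ := h
  let ⟨w', hw'⟩ := h'
  ⟨w.append w', (w.length_append w').trans_le (add_le_add hw hw')⟩

theorem mono (h : DistLE G x y k) (hkl : k ≤ l) : DistLE G x y l :=
  let ⟨w, hw⟩ := h
  ⟨w, hw.trans hkl⟩

theorem of_adj (h : G.Adj x y) : DistLE G x y 1 := ⟨h.toWalk, le_rfl⟩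

end DistLE

namespace SetDistGE

variable {V : Type} {G : SimpleGraph V} {A A' B B' : Set V} {d d' : ℕ}

theorem symm_s11 (h : SetDistGE G A B d) : SetDistGE G B A d := fun _ _ hx hy w =>
  (h hy hx w.reverse).trans_eq w.length_reverse

theorem mono (h : SetDistGE G A B d) (hA : A' ⊆ A) (hB : B' ⊆ B) (hd : d' ≤ d) :
    SetDistGE G A' B' d' := fun _ _ hx hy w => hd.trans (h (hA hx) (hB hy) w)

theorem union_left (h : SetDistGE G A B d) (h' : SetDistGE G A' B d) :
    SetDistGE G (A ∪ A') B d := by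
  rintro x y (hx | hx) hy w
  exacts [h hx hy w, h' hx hy w]

theorem union_right (h : SetDistGE G A B d) (h' : SetDistGE G A B' d) :
    SetDistGE G A (B ∪ B') d :=
  (h.symm_s11.union_left h'.symm_s11).symm_s11

theorem of_forall_not_distLE (h : ∀ x ∈ A, ∀ y ∈ B, ¬DistLE G x y d) :
    SetDistGE G A B (d + 1) := fun x y hx hy w => by
  by_contra! hw
  exact h x hx y hy ⟨w, Nat.le_of_lt_succ hw⟩

theorem lt_of_distLE (h : SetDistGE G A B d) {x y : V} {k : ℕ} (hx : x ∈ A) (hy : y ∈ B)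
    (hxy : DistLE G x y k) : d ≤ k :=
  let ⟨w, hw⟩ := hxy
  (h hx hy w).trans hw

theorem exists_distLE_of_not (h : ¬SetDistGE G A B (d + 1)) :
    ∃ x ∈ A, ∃ y ∈ B, DistLE G x y d := by
  by_contra! h'
  exact h (of_forall_not_distLE h')

end SetDistGE

namespace CoarseMenger

variable {V : Type} {G : SimpleGraph V}

section Connectivity

variable {A S T : Set V}

theorem exists_walk_of_adj_succ {g : ℕ → V} {i j : ℕ} (hij : i ≤ j)
    (hadj : ∀ t, i ≤ t → t < j → G.Adj (g t) (g (t + 1))) :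
    ∃ w : G.Walk (g i) (g j), w.length = j - i ∧ {v | v ∈ w.support} = g '' Set.Icc i j := by
  induction j, hij using Nat.le_induction with
  | base => exact ⟨Walk.nil, by simp, by simp⟩
  | succ j hij ih =>
    obtain ⟨w, hlen, hsupp⟩ := ih fun t hit htj => hadj t hit (htj.trans j.lt_succ_self)
    refine ⟨w.concat (hadj j hij j.lt_succ_self), by rw [Walk.length_concat]; omega, ?_⟩
    have hset : {v | v ∈ (w.concat (hadj j hij j.lt_succ_self)).support} =
        insert (g (j + 1)) {v | v ∈ w.support} := by
      ext v
      simp [Walk.support_concat, or_comm]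
    rw [hset, hsupp, ← Set.image_insert_eq]
    congr 1
    ext t
    simp only [Set.mem_insert_iff, Set.mem_Icc]
    omega

theorem distLE_of_adj_succ {g : ℕ → V} {i j : ℕ} (hij : i ≤ j)
    (hadj : ∀ t, i ≤ t → t < j → G.Adj (g t) (g (t + 1))) : DistLE G (g i) (g j) (j - i) :=
  let ⟨w, hw, _⟩ := exists_walk_of_adj_succ hij hadj
  ⟨w, hw.le⟩

theorem connected_induce_image_Icc {g : ℕ → V} {i j : ℕ} (hij : i ≤ j)
    (hadj : ∀ t, i ≤ t → t < j → G.Adj (g t) (g (t + 1))) :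
    (G.induce (g '' Set.Icc i j)).Connected := by
  obtain ⟨w, _, hw⟩ := exists_walk_of_adj_succ hij hadj
  exact hw ▸ w.connected_induce_support

theorem exists_connected_insert_of_distLE {x y : V} {k : ℕ} (h : DistLE G x y (k + 1)) :
    ∃ L : Set V, x ∈ L ∧ (∀ z ∈ L, DistLE G x z k) ∧ (G.induce (insert y L)).Connected := by
  obtain ⟨w, hw⟩ := h
  refine ⟨{z | z ∈ w.support ∧ DistLE G x z k}, ⟨w.start_mem_support, .refl x k⟩,
    fun z hz => hz.2, ?_⟩
  suffices h : insert y {z | z ∈ w.support ∧ DistLE G x z k} = {z | z ∈ w.support} from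
    h ▸ w.connected_induce_support
  ext z
  refine ⟨?_, fun hz => ?_⟩
  · rintro (rfl | hz)
    exacts [w.end_mem_support, hz.1]
  · by_cases hzy : z = y
    · exact Or.inl hzy
    · classical
      have := w.length_takeUntil_lt_length hz hzy
      exact Or.inr ⟨hz, w.takeUntil z hz, by omega⟩

theorem exists_isSTPath_subset (hA : (G.induce A).Connected) (hS : (A ∩ S).Nonempty)
    (hT : (A ∩ T).Nonempty) : ∃ P ⊆ A, IsSTPath G S T P := by
  obtain ⟨s, hsA, hsS⟩ := hS
  obtain ⟨t, htA, htT⟩ := hT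
  obtain ⟨w, hw⟩ := hA.exists_isPath ⟨s, hsA⟩ ⟨t, htA⟩
  let φ := Embedding.induce (G := G) A
  refine ⟨{x | x ∈ (w.map φ.toHom).support}, ?_, s, t, w.map φ.toHom,
    hw.map φ.injective, hsS, htT, rfl⟩
  intro v hv
  simp only [Walk.support_map, List.mem_map, Set.mem_ofPred_eq] at hv
  obtain ⟨u, _, rfl⟩ := hv
  exact u.2

theorem hasKPaths_two {B : Set V} {d : ℕ} (hA : (G.induce A).Connected)
    (hAS : (A ∩ S).Nonempty) (hAT : (A ∩ T).Nonempty) (hB : (G.induce B).Connected)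
    (hBS : (B ∩ S).Nonempty) (hBT : (B ∩ T).Nonempty) (hAB : SetDistGE G A B d) :
    HasKPaths G S T 2 d := by
  obtain ⟨P, hPA, hP⟩ := exists_isSTPath_subset hA hAS hAT
  obtain ⟨Q, hQB, hQ⟩ := exists_isSTPath_subset hB hBS hBT
  have hPQ : SetDistGE G P Q d := hAB.mono hPA hQB le_rfl
  refine ⟨![P, Q], ?_, ?_⟩
  · rw [Fin.forall_fin_two]
    exact ⟨hP, hQ⟩
  · intro i j hij
    fin_cases i <;> fin_cases j
    exacts [absurd rfl hij, hPQ, hPQ.symm_s11, absurd rfl hij]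

end Connectivity

section IntervalChain

variable {ι : Type*} {a b : ι → ℤ} {s L n : ℤ}

/-- Regarding `x : ι` as the interval `[a x, b x]`: the members `c 0, …, c m` form a chain whose
last interval passes `n`, in which the right ends grow by at least `L`, consecutive intervals
overlap by at least `s`, and left ends grow by at least `s`; the interval two steps later
starts at most `2 * s` before the current one ends. -/
structure IsIntervalChain (a b : ι → ℤ) (s L n : ℤ) (m : ℕ) (c : ℕ → ι) : Prop where
  lt_last : n < b (c m)
  right_le : ∀ k < m, b (c k) ≤ n
  right_add_le : ∀ k < m, b (c k) + L ≤ b (c (k + 1))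
  left_succ_add_le : ∀ k < m, a (c (k + 1)) + s ≤ b (c k)
  left_add_le : ∀ k, k + 2 ≤ m → a (c (k + 1)) + s ≤ a (c (k + 2))
  right_le_left : ∀ k, k + 2 ≤ m → b (c k) ≤ a (c (k + 2)) + 2 * s

/-- Some interval chain starts with `x` and has its next left end, if any, at least `q`. -/
def HasChainFrom (a b : ι → ℤ) (s L n : ℤ) (x : ι) (q : ℤ) : Prop :=
  ∃ m c, IsIntervalChain a b s L n m c ∧ c 0 = x ∧ (0 < m → q ≤ a (c 1))

theorem hasChainFrom_of_lt {x : ι} (hx : n < b x) (q : ℤ) : HasChainFrom a b s L n x q :=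
  ⟨0, fun _ => x, ⟨hx, by omega, by omega, by omega, by omega, by omega⟩, rfl, by omega⟩

theorem HasChainFrom.mono {x : ι} {q q' : ℤ} (h : HasChainFrom a b s L n x q) (hq : q' ≤ q) :
    HasChainFrom a b s L n x q' :=
  let ⟨m, c, hc, h0, h1⟩ := h
  ⟨m, c, hc, h0, fun hm => hq.trans (h1 hm)⟩

theorem HasChainFrom.cons {x y : ι} {q : ℤ} (h : HasChainFrom a b s L n y q) (hx : b x ≤ n)
    (hxy : b x + L ≤ b y) (hyx : a y + s ≤ b x) (hyq : a y + s ≤ q) (hxq : b x ≤ q + 2 * s) :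
    HasChainFrom a b s L n x (a y) := by
  obtain ⟨m, c, hc, rfl, hq⟩ := h
  refine ⟨m + 1, fun k => Nat.casesOn k x c, ⟨hc.lt_last, ?_, ?_, ?_, ?_, ?_⟩, rfl, fun _ => le_rfl⟩
  · rintro (_ | k) hk
    exacts [hx, hc.right_le k (by omega)]
  · rintro (_ | k) hk
    exacts [hxy, hc.right_add_le k (by omega)]
  · rintro (_ | k) hk
    exacts [hyx, hc.left_succ_add_le k (by omega)]
  · rintro (_ | k) hk
    exacts [hyq.trans (hq (by omega)), hc.left_add_le k (by omega)]
  · rintro (_ | k) hk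
    · have := hq (by omega)
      change b x ≤ a (c 1) + 2 * s
      omega
    · exact hc.right_le_left k (by omega)

theorem exists_max_right (hb : BddAbove (Set.range b)) {q : ℤ} (h : ∃ x, a x ≤ q) :
    ∃ x, a x ≤ q ∧ ∀ z, a z ≤ q → b z ≤ b x := by
  have hne : (b '' {x | a x ≤ q}).Nonempty := Set.Nonempty.image b h
  have hbdd : BddAbove (b '' {x | a x ≤ q}) := hb.mono (Set.image_subset_range _ _)
  obtain ⟨x, hx, hmax⟩ := Int.csSup_mem hne hbdd
  exact ⟨x, hx, fun z hz => hmax ▸ le_csSup hbdd ⟨z, hz, rfl⟩⟩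

/-- Among the intervals overlapping that of `x` by at least `2 * s`, the one of `y` reaches
furthest, and it reaches at least `L` beyond the interval of `x`. -/
structure IsGreedyNext (a b : ι → ℤ) (s L : ℤ) (x y : ι) : Prop where
  left_le : a y ≤ b x - 2 * s
  right_add_le : b x + L ≤ b y
  right_le : ∀ z, a z ≤ b x - 2 * s → b z ≤ b y

theorem exists_isGreedyNext (hb : BddAbove (Set.range b)) (hsL : 2 * s ≤ L)
    (hdeep : ∀ i, 0 ≤ i → i ≤ n → ∃ x, a x ≤ i - L ∧ i + L ≤ b x) {x : ι} (h0 : 0 ≤ b x)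
    (hn : b x ≤ n) : ∃ y, IsGreedyNext a b s L x y := by
  obtain ⟨u, hau, hbu⟩ := hdeep (b x) h0 hn
  obtain ⟨y, hay, hmax⟩ := exists_max_right (a := a) hb (q := b x - 2 * s) ⟨u, by omega⟩
  exact ⟨y, hay, hbu.trans (hmax u (by omega)), hmax⟩

-- If the interval after the greedy successor `y` already overlaps that of `x` by `s`, then `y` is
-- skipped; otherwise the left ends have grown by `s`.
theorem IsGreedyNext.hasChainFrom (hb : BddAbove (Set.range b)) (hs : 0 ≤ s) (hL : 0 < L)
    (hsL : 2 * s ≤ L) (hdeep : ∀ i, 0 ≤ i → i ≤ n → ∃ x, a x ≤ i - L ∧ i + L ≤ b x) {x y : ι}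
    (hxy : IsGreedyNext a b s L x y) (h0 : 0 ≤ b x) (hn : b x ≤ n) :
    HasChainFrom a b s L n x (a y) := by
  have hay := hxy.left_le
  have hby := hxy.right_add_le
  by_cases hyn : n < b y
  · exact (hasChainFrom_of_lt hyn (b x)).cons hn hby (by omega) (by omega) (by omega)
  obtain ⟨z, hyz⟩ := exists_isGreedyNext hb hsL hdeep (by omega : 0 ≤ b y) (by omega)
  have hbz := hyz.right_add_le
  have haz : b x - 2 * s < a z := by
    by_contra! hle
    have := hxy.right_le z hle
    omega
  by_cases hskip : b x - s < a z
  · exact (hyz.hasChainFrom hb hs hL hsL hdeep (by omega) (by omega)).cons hn hby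
      (by omega) (by omega) (by omega)
  suffices h : HasChainFrom a b s L n x (a z) from h.mono (by omega)
  by_cases hzn : n < b z
  · exact (hasChainFrom_of_lt hzn (b x)).cons hn (by omega) (by omega) (by omega) (by omega)
  obtain ⟨w, hzw⟩ := exists_isGreedyNext hb hsL hdeep (by omega : 0 ≤ b z) (by omega)
  have haw : b y - 2 * s < a w := by
    by_contra! hle
    have := hyz.right_le w hle
    have := hzw.right_add_le
    omega
  exact (hzw.hasChainFrom hb hs hL hsL hdeep (by omega) (by omega)).cons hn
    (by omega) (by omega) (by omega) (by omega)
termination_by (n - b x).toNat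

theorem IsIntervalChain.right_zero_le {m : ℕ} {c : ℕ → ι} (hc : IsIntervalChain a b s L n m c)
    (hL : 0 ≤ L) {k : ℕ} (hk : k ≤ m) : b (c 0) ≤ b (c k) := by
  induction k with
  | zero => rfl
  | succ k ih =>
    have := ih (by omega)
    have := hc.right_add_le k (by omega)
    omega

theorem IsIntervalChain.ends_le {m : ℕ} {c : ℕ → ι} (hc : IsIntervalChain a b s L n m c)
    {left right : ℕ → ℤ} (hleft : ∀ k < m, a (c (k + 1)) = left k)
    (hright : ∀ k < m, b (c k) = right k) :
    (∀ k < m, left k + s ≤ right k) ∧ ∀ k, k + 1 < m →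
      right k + L ≤ right (k + 1) ∧ left k + s ≤ left (k + 1) ∧
        right k ≤ left (k + 1) + 2 * s := by
  refine ⟨fun k hk => ?_, fun k hk => ⟨?_, ?_, ?_⟩⟩
  · rw [← hleft k hk, ← hright k hk]
    exact hc.left_succ_add_le k hk
  · rw [← hright k (by omega), ← hright (k + 1) hk]
    exact hc.right_add_le k (by omega)
  · rw [← hleft k (by omega), ← hleft (k + 1) hk]
    exact hc.left_add_le k hk
  · rw [← hright k (by omega), ← hleft (k + 1) hk]
    exact hc.right_le_left k hk

theorem exists_isIntervalChain (hb : BddAbove (Set.range b)) (hs : 0 ≤ s) (hL : 0 < L)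
    (hsL : 2 * s ≤ L) (hn : 0 ≤ n)
    (hdeep : ∀ i, 0 ≤ i → i ≤ n → ∃ x, a x ≤ i - L ∧ i + L ≤ b x) :
    ∃ m c, IsIntervalChain a b s L n m c ∧ a (c 0) ≤ -L ∧ L ≤ b (c 0) ∧
      ∀ k < m, -L < a (c (k + 1)) := by
  obtain ⟨u, hau, hbu⟩ := hdeep 0 le_rfl hn
  obtain ⟨x, hax, hmax⟩ := exists_max_right (a := a) hb (q := -L) ⟨u, by omega⟩
  have hux := hmax u (by omega)
  obtain ⟨q, m, c, hc, rfl, -⟩ : ∃ q, HasChainFrom a b s L n x q := by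
    by_cases hxn : n < b x
    · exact ⟨0, hasChainFrom_of_lt hxn 0⟩
    · obtain ⟨y, hxy⟩ := exists_isGreedyNext hb hsL hdeep (by omega : 0 ≤ b x) (by omega)
      exact ⟨a y, hxy.hasChainFrom hb hs hL hsL hdeep (by omega) (by omega)⟩
  refine ⟨m, c, hc, hax, by omega, fun k hk => ?_⟩
  by_contra! hle
  have := hmax _ hle
  have := hc.right_add_le k hk
  have := hc.right_zero_le hL.le hk.le
  omega

end IntervalChain

section Geodesic

/-- A geodesic of `G`, given by its vertices `vert 0, …, vert length`; the values of `vert` beyond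
`length` are junk. -/
structure Geodesic (G : SimpleGraph V) where
  length : ℕ
  vert : ℕ → V
  adj : ∀ i < length, G.Adj (vert i) (vert (i + 1))
  le_add : ∀ {i j k}, i ≤ length → j ≤ length → DistLE G (vert i) (vert j) k → i ≤ j + k

instance : CoeFun (Geodesic G) fun _ => ℕ → V := ⟨Geodesic.vert⟩

namespace Geodesic

variable (P : Geodesic G) {S T A : Set V} {u v : V} {i j k q r : ℕ}

theorem connected_image_Icc (hij : i ≤ j) (hj : j ≤ P.length) :
    (G.induce (P '' Set.Icc i j)).Connected :=
  connected_induce_image_Icc hij fun t _ htj => P.adj t (htj.trans_le hj)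

theorem distLE_vert (hij : i ≤ j) (hj : j ≤ P.length) : DistLE G (P i) (P j) (j - i) :=
  distLE_of_adj_succ hij fun t _ htj => P.adj t (htj.trans_le hj)

theorem connected_image_uIcc (hi : i ≤ P.length) (hj : j ≤ P.length) :
    (G.induce (P '' Set.uIcc i j)).Connected :=
  P.connected_image_Icc inf_le_sup (sup_le hi hj)

/-- The geodesic is a shortest path from `S` to `T`. -/
structure IsShortest (S T : Set V) : Prop where
  start_mem : P 0 ∈ S
  end_mem : P P.length ∈ T
  length_le : ∀ {s t k}, s ∈ S → t ∈ T → DistLE G s t k → P.length ≤ k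

variable {P}

theorem IsShortest.index_le (hP : P.IsShortest S T) (hv : v ∈ S) (hj : j ≤ P.length)
    (h : DistLE G v (P j) k) : j ≤ k := by
  have := hP.length_le hv hP.end_mem (h.trans (P.distLE_vert hj le_rfl))
  omega

theorem IsShortest.length_le_add (hP : P.IsShortest S T) (hv : v ∈ T) (hj : j ≤ P.length)
    (h : DistLE G v (P j) k) : P.length ≤ j + k := by
  have := hP.length_le hP.start_mem hv ((P.distLE_vert j.zero_le hj).trans h.symm_s11)
  omega

theorem exists_isShortest (h : ∃ s ∈ S, ∃ t ∈ T, G.Reachable s t) :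
    ∃ P : Geodesic G, P.IsShortest S T := by
  classical
  have hex : ∃ k, ∃ s ∈ S, ∃ t ∈ T, ∃ w : G.Walk s t, w.length = k :=
    let ⟨s, hs, t, ht, ⟨w⟩⟩ := h
    ⟨w.length, s, hs, t, ht, w, rfl⟩
  obtain ⟨s, hs, t, ht, w, hw⟩ := Nat.find_spec hex
  have hmin : ∀ {s' t' k}, s' ∈ S → t' ∈ T → DistLE G s' t' k → w.length ≤ k :=
    fun hs' ht' ⟨w', hw'⟩ => hw ▸ (Nat.find_min' hex ⟨_, hs', _, ht', w', rfl⟩).trans hw'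
  refine ⟨⟨w.length, w.getVert, fun i hi => w.adj_getVert_succ hi, fun {i j k} hi _ hij => ?_⟩,
    by simpa using hs, by simpa using ht, hmin⟩
  have := hmin hs ht (k := j + k + (w.length - i)) <|
    (DistLE.trans ⟨w.take j, (w.take_length j).trans_le (min_le_left _ _)⟩ hij.symm_s11).trans
      ⟨w.drop i, (w.drop_length i).le⟩
  omega

variable (P)

/-- `v` has distance at most `r` from the geodesic. -/
def Near (r : ℕ) (v : V) : Prop := ∃ j ≤ P.length, DistLE G v (P j) r

variable {P}

theorem Near.mono (h : P.Near r v) (hrk : r ≤ k) : P.Near k v :=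
  let ⟨j, hj, hvj⟩ := h
  ⟨j, hj, hvj.mono hrk⟩

theorem Near.of_distLE (h : P.Near r v) (huv : DistLE G u v k) : P.Near (k + r) u :=
  let ⟨j, hj, hvj⟩ := h
  ⟨j, hj, huv.trans hvj⟩

variable (P)

/-- Every vertex of the geodesic within distance `r` of `A` has index less than `q`. -/
def ShadowBefore (r : ℕ) (A : Set V) (q : ℕ) : Prop :=
  ∀ v ∈ A, ∀ i ≤ P.length, DistLE G v (P i) r → i < q

variable {P}

theorem ShadowBefore.union {B : Set V} (hA : P.ShadowBefore r A q) (hB : P.ShadowBefore r B q) :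
    P.ShadowBefore r (A ∪ B) q := by
  rintro v (hv | hv)
  exacts [hA v hv, hB v hv]

theorem ShadowBefore.setDistGE (hA : P.ShadowBefore r A i) :
    SetDistGE G A (P '' Set.Icc i P.length) (r + 1) := by
  refine .of_forall_not_distLE ?_
  rintro v hv _ ⟨t, ht, rfl⟩ h
  exact (hA v hv t ht.2 h).not_ge ht.1

theorem shadowBefore_image_uIcc (hi : i ≤ P.length) (hj : j ≤ P.length) (hq : max i j + k < q) :
    P.ShadowBefore k (P '' Set.uIcc i j) q := by
  rintro _ ⟨t, ht, rfl⟩ l hl h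
  have := P.le_add hl (ht.2.trans (sup_le hi hj)) h.symm_s11
  have : t ≤ max i j := ht.2
  omega

variable (P)

/-- The vertices at distance more than `r` from the geodesic. -/
def far (r : ℕ) : Set V := {v | ¬P.Near r v}

/-- A component of the graph induced on the vertices at distance more than `r` from the geodesic. -/
abbrev FarComponent (r : ℕ) := (G.induce (P.far r)).ConnectedComponent

end Geodesic

namespace Geodesic.FarComponent

variable {P : Geodesic G} {r : ℕ} {C D : P.FarComponent r} {x y : V} {i j k : ℕ}

/-- The vertices of `G` in a far component. -/
def verts (C : P.FarComponent r) : Set V := Subtype.val '' C.supp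

theorem verts_subset_far : C.verts ⊆ P.far r := by
  rintro _ ⟨v, _, rfl⟩
  exact v.2

theorem lt_of_near (hx : x ∈ C.verts) (h : P.Near k x) : r < k := by
  by_contra! hk
  exact verts_subset_far hx (h.mono hk)

theorem exists_mem_verts (hx : x ∈ P.far r) : ∃ C : P.FarComponent r, x ∈ C.verts :=
  ⟨(G.induce (P.far r)).connectedComponentMk ⟨x, hx⟩, ⟨x, hx⟩, rfl, rfl⟩

theorem eq_of_mem_verts (hC : x ∈ C.verts) (hD : x ∈ D.verts) : C = D := by
  obtain ⟨u, hu, rfl⟩ := hC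
  obtain ⟨v, hv, huv⟩ := hD
  obtain rfl := Subtype.ext huv
  exact ConnectedComponent.eq_of_common_vertex hu hv

theorem mem_verts_of_adj (hx : x ∈ C.verts) (hxy : G.Adj x y) (hy : y ∈ P.far r) :
    y ∈ C.verts := by
  obtain ⟨u, hu, rfl⟩ := hx
  exact ⟨⟨y, hy⟩, (C.mem_supp_congr_adj (v := u) (w := ⟨y, hy⟩) hxy).mp hu, rfl⟩

theorem connected_verts (C : P.FarComponent r) : (G.induce C.verts).Connected := by
  let f : C.toSimpleGraph →g G.induce C.verts :=
    ⟨fun v => ⟨v.1, v.1, v.2, rfl⟩, fun h => h⟩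
  refine C.connected_toSimpleGraph.map f ?_
  rintro ⟨_, v, hv, rfl⟩
  exact ⟨⟨v, hv⟩, rfl⟩

/-- Some vertex of the far component `C` has distance `r + 1` from the vertex of index `j`. -/
def AttachesAt (C : P.FarComponent r) (j : ℕ) : Prop :=
  j ≤ P.length ∧ ∃ v ∈ C.verts, DistLE G v (P j) (r + 1)

theorem exists_attachesAt_of_distLE (hx : x ∈ C.verts) (hy : y ∉ C.verts) (h : DistLE G x y k) :
    ∃ z j, C.AttachesAt j ∧ DistLE G z (P j) r ∧ DistLE G z y k := by
  obtain ⟨w, hw⟩ := h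
  induction w generalizing k with
  | nil => exact absurd hx hy
  | @cons x x' y hxx' w ih =>
    rw [Walk.length_cons] at hw
    by_cases hx' : P.Near r x'
    · obtain ⟨j, hj, hd⟩ := hx'
      exact ⟨x', j, ⟨hj, x, hx, ((DistLE.of_adj hxx').trans hd).mono (Nat.add_comm 1 r).le⟩, hd,
        w, by omega⟩
    · exact ih (mem_verts_of_adj hx hxx' hx') hy (by omega)

theorem exists_attachesAt_of_distLE_vert (hx : x ∈ C.verts) (hi : i ≤ P.length)
    (h : DistLE G x (P i) k) :
    ∃ j, C.AttachesAt j ∧ i ≤ j + (k + r) ∧ j ≤ i + (k + r) := by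
  have hPi : P i ∉ C.verts := fun hC => (lt_of_near hC ⟨i, hi, .refl _ 0⟩).not_ge r.zero_le
  obtain ⟨z, j, hj, hzj, hzi⟩ := exists_attachesAt_of_distLE hx hPi h
  have hij := hzi.symm_s11.trans hzj
  exact ⟨j, hj, P.le_add hi hj.1 hij, P.le_add hj.1 hi (hij.symm_s11)⟩

theorem exists_attachesAt_of_ne (hCD : C ≠ D) (hx : x ∈ C.verts) (hy : y ∈ D.verts)
    (h : DistLE G x y k) :
    ∃ i j, C.AttachesAt i ∧ D.AttachesAt j ∧ i ≤ j + (k + 2 * r) := by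
  obtain ⟨z, i, hi, hzi, hzy⟩ :=
    exists_attachesAt_of_distLE hx (fun hyC => hCD (eq_of_mem_verts hyC hy)) h
  have hz : z ∉ D.verts := fun hz => verts_subset_far hz ⟨i, hi.1, hzi⟩
  obtain ⟨z', j, hj, hz'j, hz'z⟩ := exists_attachesAt_of_distLE hy hz hzy.symm_s11
  have := P.le_add hi.1 hj.1 ((hzi.symm_s11.trans hz'z.symm_s11).trans hz'j)
  exact ⟨i, j, hi, hj, by omega⟩

/-- `g 0, …, g (r + 1)` is a shortest path from the vertex of index `j` on the geodesic to `C`. -/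
structure IsLeg (C : P.FarComponent r) (j : ℕ) (g : ℕ → V) : Prop where
  index_le : j ≤ P.length
  zero : g 0 = P j
  adj : ∀ t ≤ r, G.Adj (g t) (g (t + 1))
  top_mem : g (r + 1) ∈ C.verts

theorem AttachesAt.exists_isLeg (h : C.AttachesAt j) : ∃ g, C.IsLeg j g := by
  obtain ⟨hj, v, hv, w, hw⟩ := h
  have hlen : w.length = r + 1 := le_antisymm hw (lt_of_near hv ⟨j, hj, w, le_rfl⟩)
  refine ⟨w.reverse.getVert, hj, w.reverse.getVert_zero, fun t ht => ?_, ?_⟩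
  · exact w.reverse.adj_getVert_succ (by rw [w.length_reverse]; omega)
  · rwa [← hlen, ← w.length_reverse, Walk.getVert_length]

open Classical in
/-- A leg from the vertex of index `j` to `C`, if `C` attaches there, and junk otherwise. -/
noncomputable def leg (C : P.FarComponent r) (j : ℕ) : ℕ → V :=
  if h : C.AttachesAt j then h.exists_isLeg.choose else P

theorem AttachesAt.isLeg_leg (h : C.AttachesAt j) : C.IsLeg j (C.leg j) := by
  rw [leg, dif_pos h]
  exact h.exists_isLeg.choose_spec

namespace IsLeg

variable {g : ℕ → V} {t : ℕ}

theorem connected_image_Icc (hg : C.IsLeg j g) (ht : t ≤ r + 1) :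
    (G.induce (g '' Set.Icc t (r + 1))).Connected :=
  connected_induce_image_Icc ht fun u _ hu => hg.adj u (Nat.le_of_lt_succ hu)

theorem distLE (hg : C.IsLeg j g) (ht : t ≤ r + 1) : DistLE G (g t) (P j) t :=
  hg.zero ▸ (distLE_of_adj_succ t.zero_le fun u _ hu => hg.adj u (by omega)).symm_s11

theorem le_of_near (hg : C.IsLeg j g) (ht : t ≤ r + 1) (h : P.Near k (g t)) : t ≤ k := by
  have hup := distLE_of_adj_succ ht fun u _ hu => hg.adj u (Nat.le_of_lt_succ hu)
  have := lt_of_near hg.top_mem (h.of_distLE hup.symm_s11)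
  omega

end IsLeg

end Geodesic.FarComponent

end Geodesic

section Chain

/-- A sequence `comp 1, …, comp length` of far components along the geodesic, from `S` to `T`.
The component `comp k` attaches first at `left k` and last at `right k`, except that `left 1` and
`right length` are junk; `right 0 = 0` is a convention. Where the spans of two components far
apart in the sequence are compared, the bounds leave room for the legs (of length `11`) and for
slack `4` or less: `29 > 11 + 4 + 2 + 11` and `21 > 2 * 10`. -/
structure ComponentChain (P : Geodesic G) (S T : Set V) where
  length : ℕ
  one_le_length : 1 ≤ length
  comp : ℕ → P.FarComponent 10
  left : ℕ → ℕ
  right : ℕ → ℕ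
  start_mem : P 0 ∈ S
  end_mem : P P.length ∈ T
  meets_start : ((comp 1).verts ∩ S).Nonempty
  meets_end : ((comp length).verts ∩ T).Nonempty
  isLeast_left : ∀ k, 2 ≤ k → k ≤ length → IsLeast {j | (comp k).AttachesAt j} (left k)
  isGreatest_right : ∀ k, 1 ≤ k → k < length → IsGreatest {j | (comp k).AttachesAt j} (right k)
  right_zero : right 0 = 0
  right_succ : ∀ k, k + 1 < length → right k + 71 ≤ right (k + 1)
  left_succ : ∀ k, 2 ≤ k → k < length → left k + 21 ≤ left (k + 1)
  left_succ_le_right : ∀ k, 1 ≤ k → k < length → left (k + 1) + 21 ≤ right k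
  right_le_left : ∀ k, k + 3 ≤ length → right k + 29 ≤ left (k + 3)

namespace ComponentChain

variable {P : Geodesic G} {S T : Set V} (X : ComponentChain P S T) {i j k l h s : ℕ} {x y v : V}

theorem right_add_le (hij : i < j) (hj : j < X.length) : X.right i + 71 ≤ X.right j := by
  induction j, hij using Nat.le_induction with
  | base => exact X.right_succ i hj
  | succ j _ ih =>
    have := ih (by omega)
    have := X.right_succ j hj
    omega

theorem right_mono (hij : i ≤ j) (hj : j < X.length) : X.right i ≤ X.right j := by
  rcases hij.eq_or_lt with rfl | hij
  · rfl
  · have := X.right_add_le hij hj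
    omega

theorem left_add_le (hi : 2 ≤ i) (hij : i < j) (hj : j ≤ X.length) :
    X.left i + 21 ≤ X.left j := by
  induction j, hij using Nat.le_induction with
  | base => exact X.left_succ i hi hj
  | succ j _ ih =>
    have := ih (by omega)
    have := X.left_succ j (by omega) hj
    omega

theorem right_add_le_left (hij : i + 3 ≤ j) (hj : j ≤ X.length) :
    X.right i + 29 ≤ X.left j := by
  have := X.right_le_left i (by omega)
  rcases hij.eq_or_lt with rfl | hij
  · omega
  · have := X.left_add_le (by omega) hij hj
    omega

theorem right_le_length (hk : k < X.length) : X.right k ≤ P.length := by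
  rcases Nat.eq_zero_or_pos k with rfl | hk0
  · exact X.right_zero.trans_le P.length.zero_le
  · exact (X.isGreatest_right k hk0 hk).1.1

theorem left_le_length (hk : 2 ≤ k) (hkl : k ≤ X.length) : X.left k ≤ P.length :=
  (X.isLeast_left k hk hkl).1.1

theorem isLeg_right (hk : 1 ≤ k) (hkl : k < X.length) :
    (X.comp k).IsLeg (X.right k) ((X.comp k).leg (X.right k)) :=
  (X.isGreatest_right k hk hkl).1.isLeg_leg

theorem isLeg_left (hk : 2 ≤ k) (hkl : k ≤ X.length) :
    (X.comp k).IsLeg (X.left k) ((X.comp k).leg (X.left k)) :=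
  (X.isLeast_left k hk hkl).1.isLeg_leg

/-- The leg joining `comp k` to the vertex of index `right k`; empty when `right k` is not the last
attachment of `comp k`. -/
def rightLeg (k : ℕ) : Set V :=
  {v | 1 ≤ k ∧ k < X.length ∧ v ∈ (X.comp k).leg (X.right k) '' Set.Icc 0 11}

/-- The component `comp k` together with the part at height at least `s` of the leg joining it to
the vertex of index `left k`. -/
def upper (s k : ℕ) : Set V :=
  (X.comp k).verts ∪ (X.comp k).leg (X.left k) '' Set.Icc s 11

/-- The part of the graph in which the paths built from `comp 1, …, comp k` may live. The radius
`13` covers the `2`-neighbourhood of a leg. -/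
def territory (k : ℕ) : Set V :=
  {v | (∃ l, 1 ≤ l ∧ l ≤ k ∧ ∃ x ∈ (X.comp l).verts, DistLE G v x 2) ∨
    ∃ l j, l ≤ k ∧ l < X.length ∧ j ≤ X.right l ∧ DistLE G v (P j) 13}

variable {X}

theorem territory_mono (hkl : k ≤ l) : X.territory k ⊆ X.territory l := by
  rintro v (⟨i, hi, hik, hv⟩ | ⟨i, j, hik, hv⟩)
  exacts [Or.inl ⟨i, hi, hik.trans hkl, hv⟩, Or.inr ⟨i, j, hik.trans hkl, hv⟩]

theorem verts_subset_territory (hk : 1 ≤ k) : (X.comp k).verts ⊆ X.territory k :=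
  fun v hv => Or.inl ⟨k, hk, le_rfl, v, hv, .refl v 2⟩

theorem mem_territory_of_distLE (hk : k < X.length) (hj : j ≤ X.right k)
    (hv : DistLE G v (P j) 13) : v ∈ X.territory k :=
  Or.inr ⟨k, j, le_rfl, hk, hj, hv⟩

theorem index_le_of_mem_territory (hk : k < X.length) (hv : v ∈ X.territory k)
    (hi : i ≤ P.length) (hvi : DistLE G v (P i) h) : i ≤ X.right k + (h + 13) := by
  rcases hv with ⟨l, hl, hlk, x, hx, hvx⟩ | ⟨l, j, hlk, hl, hj, hvj⟩
  · obtain ⟨j, hj, hij, -⟩ := Geodesic.FarComponent.exists_attachesAt_of_distLE_vert hx hi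
      (hvx.symm_s11.trans hvi)
    have := (X.isGreatest_right l hl (by omega)).2 hj
    have := X.right_mono hlk hk
    omega
  · have := P.le_add hi (hj.trans (X.right_le_length hl)) (hvi.symm_s11.trans hvj)
    have := X.right_mono hlk hk
    omega

theorem shadowBefore_of_subset_territory {A : Set V} (hk : k < X.length)
    (hA : A ⊆ X.territory k) {q : ℕ} (hq : X.right k + (h + 13) < q) : P.ShadowBefore h A q :=
  fun _ hv _ hi hvi => (index_le_of_mem_territory hk (hA hv) hi hvi).trans_lt hq

theorem exists_of_mem_rightLeg (hv : v ∈ X.rightLeg k) :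
    ∃ t ≤ 11, DistLE G v (P (X.right k)) t ∧ ∀ h, P.Near h v → t ≤ h := by
  obtain ⟨hk, hkl, t, ht, rfl⟩ := hv
  have hleg := X.isLeg_right hk hkl
  exact ⟨t, ht.2, hleg.distLE ht.2, fun h => hleg.le_of_near ht.2⟩

theorem index_rightLeg (hk : k < X.length) (hv : v ∈ X.rightLeg k) (hi : i ≤ P.length)
    (hvi : DistLE G v (P i) h) : X.right k ≤ i + 2 * h := by
  obtain ⟨t, -, hvt, hlevel⟩ := exists_of_mem_rightLeg hv
  have := hlevel h ⟨i, hi, hvi⟩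
  have := P.le_add (X.right_le_length hk) hi (hvt.symm_s11.trans hvi)
  omega

theorem rightLeg_subset_territory (hk : k < X.length) : X.rightLeg k ⊆ X.territory k := by
  intro v hv
  obtain ⟨t, ht, hvt, -⟩ := exists_of_mem_rightLeg hv
  exact mem_territory_of_distLE hk le_rfl (hvt.mono (by omega))

theorem setDistGE_rightLeg_territory (hjk : j < k) :
    SetDistGE G (X.rightLeg k) (X.territory j) 3 := by
  refine .of_forall_not_distLE fun x hx y hy hxy => ?_
  have hk := hx.2.1
  obtain ⟨t, ht, hxt, -⟩ := exists_of_mem_rightLeg hx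
  have := index_le_of_mem_territory (hjk.trans hk) hy (X.right_le_length hk) (hxy.symm_s11.trans hxt)
  have := X.right_add_le hjk hk
  omega

theorem connected_union_leg {A : Set V} (hA : (G.induce A).Connected) (hk : (X.comp k).verts ⊆ A)
    {g : ℕ → V} (hg : (X.comp k).IsLeg j g) (hs : s ≤ 11) :
    (G.induce (A ∪ g '' Set.Icc s 11)).Connected :=
  induce_union_connected hA.preconnected (hg.connected_image_Icc hs).preconnected
    ⟨_, hk hg.top_mem, 11, ⟨hs, le_rfl⟩, rfl⟩

theorem connected_upper (hk : 2 ≤ k) (hkl : k ≤ X.length) (hs : s ≤ 11) :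
    (G.induce (X.upper s k)).Connected :=
  connected_union_leg (Geodesic.FarComponent.connected_verts _) subset_rfl (X.isLeg_left hk hkl) hs

theorem vert_left_mem_upper (hk : 2 ≤ k) (hkl : k ≤ X.length) : P (X.left k) ∈ X.upper 0 k :=
  Or.inr ⟨0, ⟨le_rfl, Nat.zero_le 11⟩, (X.isLeg_left hk hkl).zero⟩

theorem le_of_near_upper (hk : 2 ≤ k) (hkl : k ≤ X.length) (hs : s ≤ 11) (hx : x ∈ X.upper s k)
    (hnear : P.Near h x) : s ≤ h := by
  rcases hx with hx | ⟨t, ht, rfl⟩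
  · have := Geodesic.FarComponent.lt_of_near hx hnear
    omega
  · exact ht.1.trans ((X.isLeg_left hk hkl).le_of_near ht.2 hnear)

theorem index_le_of_mem_upper (hk : 2 ≤ k) (hkl : k ≤ X.length) (hx : x ∈ X.upper s k)
    (hi : i ≤ P.length) (hh : h ≤ 10) (hxi : DistLE G x (P i) h) : i ≤ X.left k + 2 * h := by
  rcases hx with hx | ⟨t, ht, rfl⟩
  · exact absurd (Geodesic.FarComponent.lt_of_near hx ⟨i, hi, hxi⟩) hh.not_gt
  · have hleg := X.isLeg_left hk hkl
    have := hleg.le_of_near ht.2 ⟨i, hi, hxi⟩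
    have := P.le_add hi hleg.index_le (hxi.symm_s11.trans (hleg.distLE ht.2))
    omega

theorem shadowBefore_of_distLE_upper {A : Set V} {g q : ℕ} (hk : 2 ≤ k) (hkl : k ≤ X.length)
    (hA : ∀ z ∈ A, ∃ u ∈ X.upper s k, DistLE G z u g) (hgh : g + h ≤ 10)
    (hq : X.left k + 2 * (g + h) < q) : P.ShadowBefore h A q := fun z hz _ hi hzi =>
  let ⟨_, hu, hzu⟩ := hA z hz
  (index_le_of_mem_upper hk hkl hu hi hgh (hzu.symm_s11.trans hzi)).trans_lt hq

theorem shadowBefore_of_distLE_upper_of_lt {A : Set V} {g : ℕ} (hk : 2 ≤ k) (hkl : k ≤ X.length)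
    (hs : s ≤ 11) (hA : ∀ z ∈ A, ∃ u ∈ X.upper s k, DistLE G z u g) (hgh : g + h < s) (q : ℕ) :
    P.ShadowBefore h A q := fun z hz i hi hzi =>
  let ⟨_, hu, hzu⟩ := hA z hz
  absurd (le_of_near_upper hk hkl hs hu ⟨i, hi, hzu.symm_s11.trans hzi⟩) hgh.not_ge

theorem left_le_of_mem_upper (hk : 2 ≤ k) (hkl : k ≤ X.length) (hx : x ∈ X.upper s k)
    (hi : i ≤ P.length) (hxi : DistLE G x (P i) h) : X.left k ≤ i + (h + 11) := by
  rcases hx with hx | ⟨t, ht, rfl⟩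
  · obtain ⟨j, hj, -, hji⟩ := Geodesic.FarComponent.exists_attachesAt_of_distLE_vert hx hi hxi
    have := (X.isLeast_left k hk hkl).2 hj
    omega
  · have hleg := X.isLeg_left hk hkl
    have := P.le_add hleg.index_le hi ((hleg.distLE ht.2).symm_s11.trans hxi)
    have : t ≤ 11 := ht.2
    omega

theorem left_le_of_upper_verts (hk : 2 ≤ k) (hkl : k ≤ X.length) (hl : 1 ≤ l) (hlm : l < X.length)
    (hx : x ∈ X.upper s k) (hy : y ∈ (X.comp l).verts) (hxy : DistLE G x y h) :
    X.left k ≤ X.right l + (h + 21) := by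
  have hleft := X.isLeast_left k hk hkl
  have hright := X.isGreatest_right l hl hlm
  rcases hx with hx | ⟨t, ht, rfl⟩
  · by_cases hkl' : X.comp k = X.comp l
    · have : X.left k ≤ X.right l := hright.2 (show (X.comp l).AttachesAt _ from hkl' ▸ hleft.1)
      omega
    · obtain ⟨i, j, hi, hj, hij⟩ := Geodesic.FarComponent.exists_attachesAt_of_ne hkl' hx hy hxy
      have := hleft.2 hi
      have := hright.2 hj
      omega
  · obtain ⟨j, hj, hij, -⟩ := Geodesic.FarComponent.exists_attachesAt_of_distLE_vert hy
      (X.left_le_length hk hkl) (hxy.symm_s11.trans ((X.isLeg_left hk hkl).distLE ht.2))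
    have := hright.2 hj
    have : t ≤ 11 := ht.2
    omega

theorem setDistGE_upper_territory (hjk : j + 3 ≤ k) (hk : k ≤ X.length) :
    SetDistGE G (X.upper s k) (X.territory j) 5 := by
  refine .of_forall_not_distLE fun x hx y hy hxy => ?_
  have hjk' := X.right_add_le_left hjk hk
  rcases hy with ⟨l, hl, hlj, z, hz, hyz⟩ | ⟨l, i, hlj, hl, hi, hyi⟩
  · have := left_le_of_upper_verts (by omega) hk hl (by omega) hx hz (hxy.trans hyz)
    have := X.right_mono hlj (by omega)
    omega
  · have := left_le_of_mem_upper (by omega) hk hx (hi.trans (X.right_le_length hl))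
      (hxy.trans hyi)
    have := X.right_mono hlj (by omega)
    omega

theorem mem_territory_of_distLE_upper (hk : 1 ≤ k) (hkl : k < X.length)
    (hx : x ∈ X.upper s (k + 1)) (hvx : DistLE G v x 2) : v ∈ X.territory (k + 1) := by
  rcases hx with hx | ⟨t, ht, rfl⟩
  · exact Or.inl ⟨k + 1, by omega, le_rfl, x, hx, hvx⟩
  · have hdist := (X.isLeg_left (by omega) hkl).distLE ht.2
    have : t ≤ 11 := ht.2
    have := X.left_succ_le_right k hk hkl
    exact Or.inr ⟨k, X.left (k + 1), by omega, hkl, by omega, (hvx.trans hdist).mono (by omega)⟩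

theorem upper_subset_territory (hk : 1 ≤ k) (hkl : k < X.length) :
    X.upper s (k + 1) ⊆ X.territory (k + 1) :=
  fun x hx => mem_territory_of_distLE_upper hk hkl hx (.refl x 2)

variable (X) {D D' E E' F : Set V} {k' j' g : ℕ}

/-- `D` joins `S` to `comp k` while staying at distance at least `3` from `D' ∪ X.rightLeg k'` and
from the part of the geodesic after that leg; it also stays away from where later components
attach. -/
structure IsParallel (k : ℕ) (D : Set V) (k' : ℕ) (D' : Set V) : Prop where
  connected : (G.induce D).Connected
  meets_start : (D ∩ S).Nonempty
  verts_subset : (X.comp k).verts ⊆ D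
  subset_territory : D ⊆ X.territory k
  setDistGE : SetDistGE G D (D' ∪ X.rightLeg k') 3
  shadow : P.ShadowBefore 2 D (X.right k')
  shadow_left : ∀ i, k < i → i ≤ X.length → P.ShadowBefore 7 D (X.left i)

/-- Sets obtained from the start of the geodesic by repeatedly passing to a parallel set ending at
a later component. -/
inductive Strand : ℕ → Set V → Prop
  | start : Strand 0 {P 0}
  | cons {k' : ℕ} {D' : Set V} {k : ℕ} {D : Set V} (strand : Strand k' D') (lt : k' < k)
      (le_length : k ≤ X.length) (parallel : X.IsParallel k D k' D') : Strand k D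

variable {X}

namespace Strand

theorem union_rightLeg_subset_territory (hD : X.Strand k D) (hk : k < X.length) :
    D ∪ X.rightLeg k ⊆ X.territory k := by
  refine Set.union_subset ?_ (rightLeg_subset_territory hk)
  cases hD with
  | start =>
    rintro _ rfl
    exact mem_territory_of_distLE hk (Nat.zero_le _) (.refl _ _)
  | cons _ _ _ h => exact h.subset_territory

theorem meets_start (hD : X.Strand k D) : (D ∩ S).Nonempty := by
  cases hD with
  | start => exact ⟨P 0, rfl, X.start_mem⟩
  | cons _ _ _ h => exact h.meets_start

theorem vert_right_mem (hD : X.Strand k D) (hk : k < X.length) :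
    P (X.right k) ∈ D ∪ X.rightLeg k := by
  cases hD with
  | start => exact Or.inl (congrArg P X.right_zero)
  | cons _ hlt _ _ =>
    exact Or.inr ⟨by omega, hk, 0, ⟨le_rfl, Nat.zero_le 11⟩, (X.isLeg_right (by omega) hk).zero⟩

theorem connected_union_rightLeg (hD : X.Strand k D) (hk : k < X.length) :
    (G.induce (D ∪ X.rightLeg k)).Connected := by
  cases hD with
  | start =>
    have : X.rightLeg 0 = ∅ := Set.eq_empty_of_forall_notMem fun v hv => absurd hv.1 (by omega)
    rw [this, Set.union_empty, induce_singleton_eq_top]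
    exact connected_top
  | cons _ hlt _ h =>
    have hk1 : 1 ≤ k := by omega
    have : X.rightLeg k = (X.comp k).leg (X.right k) '' Set.Icc 0 11 :=
      Set.ext fun v => ⟨fun hv => hv.2.2, fun hv => ⟨hk1, hk, hv⟩⟩
    rw [this]
    exact connected_union_leg h.connected h.verts_subset (X.isLeg_right hk1 hk) (Nat.zero_le 11)

end Strand

theorem IsParallel.setDistGE_image_uIcc (h : X.IsParallel k D k' D') (hk' : k' < k)
    (hk : k < X.length) :
    SetDistGE G (P '' Set.uIcc (X.right k') (X.left (k + 1))) (D ∪ X.rightLeg k) 3 := by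
  have hright := X.right_add_le hk' hk
  have hleft := X.left_succ_le_right k (by omega) hk
  refine .of_forall_not_distLE ?_
  rintro _ ⟨t, ht, rfl⟩ v hv hvt
  have hmin : min (X.right k') (X.left (k + 1)) ≤ t := ht.1
  have hmax : t ≤ max (X.right k') (X.left (k + 1)) := ht.2
  have htP : t ≤ P.length := by
    have := X.right_le_length hk
    omega
  rcases hv with hv | hv
  · have := h.shadow v hv t htP hvt.symm_s11
    have := h.shadow_left (k + 1) (by omega) hk v hv t htP (hvt.symm_s11.mono (by omega))
    omega
  · have := index_rightLeg hk hv htP hvt.symm_s11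
    omega

theorem Strand.append (hD' : X.Strand k' D') (hk' : k' < k) (hk : k < X.length)
    (h : X.IsParallel k D k' D') (hU : SetDistGE G (X.upper 0 (k + 1)) (D ∪ X.rightLeg k) 3) :
    X.IsParallel (k + 1) (D' ∪ X.rightLeg k' ∪
      (P '' Set.uIcc (X.right k') (X.left (k + 1)) ∪ X.upper 0 (k + 1))) k D := by
  have hk'X := hk'.trans hk
  have hk2 : 2 ≤ k + 1 := by omega
  have hright := X.right_add_le hk' hk
  have hleft := X.left_succ_le_right k (by omega) hk
  have hrightP := X.right_le_length hk'X
  have hleftP := X.left_le_length hk2 hk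
  have hterr := hD'.union_rightLeg_subset_territory hk'X
  have hshadow {r q : ℕ} (hr : r ≤ 10) (h1 : X.right k' + (r + 13) < q)
      (h2 : X.left (k + 1) + 2 * r < q) :
      P.ShadowBefore r (D' ∪ X.rightLeg k' ∪
        (P '' Set.uIcc (X.right k') (X.left (k + 1)) ∪ X.upper 0 (k + 1))) q :=
    (shadowBefore_of_subset_territory hk'X hterr h1).union
      ((Geodesic.shadowBefore_image_uIcc hrightP hleftP (by omega)).union
        (shadowBefore_of_distLE_upper (g := 0) hk2 hk (fun z hz => ⟨z, hz, .refl z 0⟩) (by omega)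
          (by omega)))
  refine ⟨?_, hD'.meets_start.mono fun v hv => ⟨Or.inl (Or.inl hv.1), hv.2⟩,
    fun v hv => Or.inr (Or.inr (Or.inl hv)), ?_, ?_, hshadow (by omega) (by omega) (by omega), ?_⟩
  · exact induce_union_connected (hD'.connected_union_rightLeg hk'X).preconnected
      (induce_union_connected (P.connected_image_uIcc hrightP hleftP).preconnected
        (connected_upper hk2 hk (Nat.zero_le 11)).preconnected
        ⟨_, ⟨_, Set.right_mem_uIcc, rfl⟩, vert_left_mem_upper hk2 hk⟩).preconnected
      ⟨_, hD'.vert_right_mem hk'X, Or.inl ⟨_, Set.left_mem_uIcc, rfl⟩⟩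
  · refine Set.union_subset (hterr.trans (territory_mono (by omega))) (Set.union_subset ?_
      (upper_subset_territory (by omega) hk))
    rintro _ ⟨t, ht, rfl⟩
    have : t ≤ max (X.right k') (X.left (k + 1)) := ht.2
    exact territory_mono k.le_succ (mem_territory_of_distLE hk (j := t) (by omega) (.refl _ _))
  · exact ((h.setDistGE.symm_s11.union_right
      ((setDistGE_rightLeg_territory hk').symm_s11.mono hterr subset_rfl le_rfl))).union_left
        ((h.setDistGE_image_uIcc hk' hk).union_left hU)
  · intro i hi hiX
    have := X.right_add_le_left (by omega : k' + 3 ≤ i) hiX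
    have := X.left_add_le hk2 hi hiX
    exact hshadow (by omega) (by omega) (by omega)

-- The part of the leg above `y` is enough to join `y` to `E`.
theorem exists_connected_union_of_mem (hE : (G.induce E).Connected) (hj : (X.comp j).verts ⊆ E)
    (hy : y ∈ E ∪ X.rightLeg j) :
    ∃ F ⊆ X.rightLeg j, y ∈ E ∪ F ∧ (G.induce (E ∪ F)).Connected ∧
      ∀ z ∈ F, ∀ h, P.Near h z → DistLE G y (P (X.right j)) h := by
  rcases hy with hy | ⟨hj1, hjX, t, ht, rfl⟩
  · exact ⟨∅, Set.empty_subset _, Or.inl hy, by rwa [Set.union_empty], by simp⟩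
  have hleg := X.isLeg_right hj1 hjX
  refine ⟨(X.comp j).leg (X.right j) '' Set.Icc t 11, ?_, Or.inr ⟨t, ⟨le_rfl, ht.2⟩, rfl⟩,
    connected_union_leg hE hj hleg ht.2, ?_⟩
  · rintro _ ⟨u, hu, rfl⟩
    exact ⟨hj1, hjX, u, ⟨u.zero_le, hu.2⟩, rfl⟩
  · rintro _ ⟨u, hu, rfl⟩ h hz
    exact (hleg.distLE ht.2).mono (hu.1.trans (hleg.le_of_near hu.2 hz))

theorem shadowBefore_two_of_near_upper (hk : 2 ≤ k) (hkX : k ≤ X.length) (hx : x ∈ X.upper 6 k)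
    (hxy : DistLE G x y 3) (hj : j < X.length)
    (hF : ∀ z ∈ F, ∀ h, P.Near h z → DistLE G y (P (X.right j)) h) (q : ℕ) :
    P.ShadowBefore 2 F q := fun z hz i hi hzi => by
  have := le_of_near_upper hk hkX (by omega) hx
    ⟨_, X.right_le_length hj, hxy.trans (hF z hz 2 ⟨i, hi, hzi⟩)⟩
  omega

theorem shadowBefore_left_of_near_upper (hk : 1 ≤ k) (hkX : k < X.length)
    (hx : x ∈ X.upper 6 (k + 1)) (hxy : DistLE G x y 3) (hjk : j ≤ k) (hFj : F ⊆ X.rightLeg j)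
    (hF : ∀ z ∈ F, ∀ h, P.Near h z → DistLE G y (P (X.right j)) h) (hi : k + 1 < i)
    (hiX : i ≤ X.length) : P.ShadowBefore 7 F (X.left i) := by
  rcases hjk.lt_or_eq with hjk | rfl
  · have := X.right_add_le_left (by omega : j + 3 ≤ i) hiX
    exact shadowBefore_of_subset_territory (hjk.trans hkX)
      (hFj.trans (rightLeg_subset_territory (hjk.trans hkX))) (by omega)
  · intro z hz l hl hzl
    have := index_le_of_mem_upper (k := j + 1) (by omega) hkX hx (X.right_le_length hkX)
      (by omega) (hxy.trans (hF z hz 7 ⟨l, hl, hzl⟩))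
    have := X.left_succ_le_right j hk hkX
    omega

theorem Strand.exists_isParallel_of_distLE (hE' : X.Strand j' E') (hj' : j' < j) (hjk : j ≤ k)
    (hk : k < X.length) (h : X.IsParallel j E j' E') (hx : x ∈ X.upper 6 (k + 1))
    (hy : y ∈ E ∪ X.rightLeg j) (hg : g ≤ 2) (hxy : DistLE G x y (g + 1))
    (hfar : SetDistGE G (X.upper 6 (k + 1)) (E' ∪ X.rightLeg j') (g + 3)) :
    ∃ D, X.IsParallel (k + 1) D j' E' := by
  have hk1 : 1 ≤ k := by omega
  have hk2 : 2 ≤ k + 1 := by omega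
  have hjX : j < X.length := by omega
  have hxy3 : DistLE G x y 3 := hxy.mono (by omega)
  obtain ⟨F, hFj, hyF, hEF, hF⟩ := exists_connected_union_of_mem h.connected h.verts_subset hy
  obtain ⟨L, hxL, hL, hyL⟩ := exists_connected_insert_of_distLE hxy
  have hLU : ∀ z ∈ L ∪ X.upper 6 (k + 1), ∃ u ∈ X.upper 6 (k + 1), DistLE G z u g := by
    rintro z (hz | hz)
    exacts [⟨x, hx, (hL z hz).symm_s11⟩, ⟨z, hz, .refl z g⟩]
  have hUE' : SetDistGE G (L ∪ X.upper 6 (k + 1)) (E' ∪ X.rightLeg j') 3 := by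
    refine .of_forall_not_distLE fun z hz v hv hzv => ?_
    obtain ⟨u, hu, hzu⟩ := hLU z hz
    have := hfar.lt_of_distLE hu hv (hzu.symm_s11.trans hzv)
    omega
  have hterr' := hE'.union_rightLeg_subset_territory (hj'.trans hjX)
  refine ⟨E ∪ F ∪ (L ∪ X.upper 6 (k + 1)), ?_,
    h.meets_start.mono fun v hv => ⟨Or.inl (Or.inl hv.1), hv.2⟩,
    fun v hv => Or.inr (Or.inr (Or.inl hv)), ?_, ?_, ?_, fun i hi hiX => ?_⟩
  · have hEFL := induce_union_connected hEF.preconnected hyL.preconnected ⟨y, hyF, Or.inl rfl⟩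
    have := induce_union_connected hEFL.preconnected
      (connected_upper hk2 hk (s := 6) (by omega)).preconnected ⟨x, Or.inr (Or.inr hxL), hx⟩
    rwa [Set.union_insert, Set.insert_eq_of_mem (Set.mem_union_left L hyF), Set.union_assoc] at this
  · refine Set.union_subset ((Set.union_subset h.subset_territory (hFj.trans
      (rightLeg_subset_territory hjX))).trans (territory_mono (by omega))) fun z hz => ?_
    obtain ⟨u, hu, hzu⟩ := hLU z hz
    exact mem_territory_of_distLE_upper hk1 hk hu (hzu.mono hg)
  · exact (h.setDistGE.union_left
      ((setDistGE_rightLeg_territory hj').mono hFj hterr' le_rfl)).union_left hUE'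
  · exact (h.shadow.union (shadowBefore_two_of_near_upper hk2 hk hx hxy3 hjX hF _)).union
      (shadowBefore_of_distLE_upper_of_lt hk2 hk (by omega) hLU (by omega) _)
  · have := X.left_add_le hk2 hi hiX
    exact ((h.shadow_left i (by omega) hiX).union
      (shadowBefore_left_of_near_upper hk1 hk hx hxy3 hjk hFj hF hi hiX)).union
      (shadowBefore_of_distLE_upper hk2 hk hLU (by omega) (by omega))

theorem IsParallel.mem_upper_six (h : X.IsParallel k D k' D') (hk : 1 ≤ k) (hkX : k < X.length)
    (hx : x ∈ X.upper 0 (k + 1)) (hy : y ∈ D ∪ X.rightLeg k) (hxy : DistLE G x y 2) :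
    x ∈ X.upper 6 (k + 1) := by
  rcases hx with hx | ⟨t, ht, rfl⟩
  · exact Or.inl hx
  refine Or.inr ⟨t, ⟨?_, ht.2⟩, rfl⟩
  by_contra! ht6
  have hleg := X.isLeg_left (by omega : 2 ≤ k + 1) hkX
  have hyP : DistLE G y (P (X.left (k + 1))) 7 :=
    (hxy.symm_s11.trans (hleg.distLE ht.2)).mono (by omega)
  rcases hy with hy | hy
  · exact (h.shadow_left (k + 1) k.lt_succ_self hkX y hy _ hleg.index_le hyP).false
  · have := index_rightLeg hkX hy hleg.index_le hyP
    have := X.left_succ_le_right k hk hkX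
    omega

theorem Strand.exists_isParallel_succ (hD' : X.Strand k' D') (hk' : k' < k) (hk : k < X.length)
    (h : X.IsParallel k D k' D') :
    ∃ j' E' N, X.Strand j' E' ∧ j' ≤ k ∧ X.IsParallel (k + 1) N j' E' := by
  have hk1 : 1 ≤ k := by omega
  by_cases hU : SetDistGE G (X.upper 0 (k + 1)) (D ∪ X.rightLeg k) 3
  · exact ⟨k, D, _, hD'.cons hk' hk.le h, le_rfl, hD'.append hk' hk h hU⟩
  obtain ⟨x, hx0, y, hy, hxy⟩ := SetDistGE.exists_distLE_of_not hU
  have hx := h.mem_upper_six hk1 hk hx0 hy hxy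
  by_cases hU' : SetDistGE G (X.upper 6 (k + 1)) (D' ∪ X.rightLeg k') 4
  · obtain ⟨N, hN⟩ := hD'.exists_isParallel_of_distLE hk' le_rfl hk h hx hy (by omega) hxy hU'
    exact ⟨k', D', N, hD', hk'.le, hN⟩
  obtain ⟨x', hx', y', hy', hxy'⟩ := SetDistGE.exists_distLE_of_not hU'
  cases hD' with
  | start =>
    obtain rfl : y' = P 0 := hy'.resolve_right fun hy0 => absurd hy0.1 (by omega)
    have := le_of_near_upper (by omega) hk (by omega) hx' ⟨0, P.length.zero_le, hxy'⟩
    omega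
  | @cons k'' D'' _ _ hD'' hk'' _ h' =>
    have hfar := (setDistGE_upper_territory (s := 6) (by omega : k'' + 3 ≤ k + 1) hk).mono
      subset_rfl (hD''.union_rightLeg_subset_territory (by omega)) le_rfl
    obtain ⟨N, hN⟩ :=
      hD''.exists_isParallel_of_distLE hk'' hk'.le hk h' hx' hy' le_rfl hxy' hfar
    exact ⟨k'', D'', N, hD'', (hk''.trans hk').le, hN⟩

variable (X)

theorem isParallel_one : X.IsParallel 1 (X.comp 1).verts 0 {P 0} where
  connected := (X.comp 1).connected_verts
  meets_start := X.meets_start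
  verts_subset := subset_rfl
  subset_territory := verts_subset_territory le_rfl
  setDistGE := by
    refine .of_forall_not_distLE fun v hv y hy hvy => ?_
    obtain rfl : y = P 0 := hy.resolve_right fun hy0 => absurd hy0.1 (by omega)
    exact absurd (Geodesic.FarComponent.lt_of_near hv ⟨0, P.length.zero_le, hvy⟩) (by omega)
  shadow := fun v hv i hi hvi =>
    absurd (Geodesic.FarComponent.lt_of_near hv ⟨i, hi, hvi⟩) (by omega)
  shadow_left := fun _ _ _ v hv i hi hvi =>
    absurd (Geodesic.FarComponent.lt_of_near hv ⟨i, hi, hvi⟩) (by omega)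

theorem exists_isParallel (hk : k < X.length) :
    ∃ k' D' D, X.Strand k' D' ∧ k' ≤ k ∧ X.IsParallel (k + 1) D k' D' := by
  induction k with
  | zero => exact ⟨0, _, _, .start, le_rfl, X.isParallel_one⟩
  | succ k ih =>
    obtain ⟨k', D', D, hD', hk', h⟩ := ih (by omega)
    exact hD'.exists_isParallel_succ (by omega) hk h

end ComponentChain

theorem ComponentChain.hasKPaths {P : Geodesic G} {S T : Set V} (X : ComponentChain P S T) :
    HasKPaths G S T 2 3 := by
  have hlast := Nat.sub_add_cancel X.one_le_length
  obtain ⟨k', D', D, hD', hk', h⟩ := X.exists_isParallel (Nat.sub_one_lt_of_lt X.one_le_length)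
  rw [hlast] at h
  have hk'X : k' < X.length := by omega
  have hright := X.right_le_length hk'X
  exact hasKPaths_two h.connected h.meets_start
    (X.meets_end.mono fun v hv => ⟨h.verts_subset hv.1, hv.2⟩)
    (induce_union_connected (hD'.connected_union_rightLeg hk'X).preconnected
      (P.connected_image_Icc hright le_rfl).preconnected
      ⟨_, hD'.vert_right_mem hk'X, _, ⟨le_rfl, hright⟩, rfl⟩)
    (hD'.meets_start.mono fun v hv => ⟨Or.inl (Or.inl hv.1), hv.2⟩)
    ⟨P P.length, Or.inr ⟨_, ⟨hright, le_rfl⟩, rfl⟩, X.end_mem⟩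
    (h.setDistGE.union_right h.shadow.setDistGE)

end Chain

section Separation

namespace Geodesic

variable {P : Geodesic G} {S T : Set V} {r L i j : ℕ} {u v : V}

theorem add_le_or_add_le_of_distLE (hi : i ≤ P.length) (hj : j ≤ P.length)
    (hv : ∀ k, DistLE G (P i) v k → L + r ≤ k) (hvj : DistLE G v (P j) r) :
    j + L ≤ i ∨ i + L ≤ j := by
  rcases le_total i j with hij | hij
  · have := hv _ ((P.distLE_vert hij hj).trans hvj.symm_s11)
    omega
  · have := hv _ ((P.distLE_vert hij hi).symm_s11.trans hvj.symm_s11)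
    omega

/-- The indices at which `C` attaches, together with the index `-L` if `C` meets `S` and the index
`P.length + L` if `C` meets `T`. -/
def FarComponent.extent (C : P.FarComponent r) (S T : Set V) (L : ℕ) : Set ℤ :=
  {z | (∃ j, C.AttachesAt j ∧ z = j) ∨ ((C.verts ∩ S).Nonempty ∧ z = -L) ∨
    ((C.verts ∩ T).Nonempty ∧ z = P.length + L)}

/-- The extent of `C` reaches at least `L` beyond `i` on both sides. -/
def FarComponent.Straddles (C : P.FarComponent r) (S T : Set V) (L i : ℕ) : Prop :=
  (∃ z ∈ C.extent S T L, z ≤ i - L) ∧ ∃ z ∈ C.extent S T L, i + L ≤ z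

/-- `v` is near the geodesic at an index at most `i - L`, or lies in a far component whose extent
has such an element. -/
def IsLeftOf (P : Geodesic G) (S T : Set V) (r L i : ℕ) (v : V) : Prop :=
  (∃ j ≤ P.length, DistLE G v (P j) r ∧ j + L ≤ i) ∨
    ∃ C : P.FarComponent r, v ∈ C.verts ∧ ∃ z ∈ C.extent S T L, z ≤ i - L

theorem IsShortest.isLeftOf_of_mem (hP : P.IsShortest S T) (hrL : r < L) (hi : i ≤ P.length)
    (hvS : v ∈ S) (hv : ∀ k, DistLE G (P i) v k → L + r ≤ k) : P.IsLeftOf S T r L i v := by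
  by_cases hnear : P.Near r v
  · obtain ⟨j, hj, hvj⟩ := hnear
    have := hP.index_le hvS hj hvj
    have := add_le_or_add_le_of_distLE hi hj hv hvj
    exact Or.inl ⟨j, hj, hvj, by omega⟩
  · obtain ⟨C, hC⟩ := FarComponent.exists_mem_verts hnear
    exact Or.inr ⟨C, hC, -L, Or.inr (Or.inl ⟨⟨v, hC, hvS⟩, rfl⟩), by omega⟩

theorem IsLeftOf.of_adj (hrL : r < L) (hi : i ≤ P.length) (huv : G.Adj u v)
    (hv : ∀ k, DistLE G (P i) v k → L + r ≤ k) (hu : P.IsLeftOf S T r L i u) :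
    P.IsLeftOf S T r L i v ∨ ∃ C : P.FarComponent r, C.Straddles S T L i := by
  have hvu := (DistLE.of_adj huv).symm_s11
  rcases hu with ⟨j, hj, huj, hji⟩ | ⟨C, hC, z, hz, hzi⟩ <;> by_cases hnear : P.Near r v
  · obtain ⟨j', hj', hvj'⟩ := hnear
    have := add_le_or_add_le_of_distLE hi hj' hv hvj'
    have := P.le_add hj' hj (hvj'.symm_s11.trans (hvu.trans huj))
    exact Or.inl (Or.inl ⟨j', hj', hvj', by omega⟩)
  · obtain ⟨C, hC⟩ := FarComponent.exists_mem_verts hnear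
    have hCj : C.AttachesAt j := ⟨hj, v, hC, (hvu.trans huj).mono (by omega)⟩
    exact Or.inl (Or.inr ⟨C, hC, j, Or.inl ⟨j, hCj, rfl⟩, by omega⟩)
  · obtain ⟨j, hj, hvj⟩ := hnear
    rcases add_le_or_add_le_of_distLE hi hj hv hvj with hji | hij
    · exact Or.inl (Or.inl ⟨j, hj, hvj, hji⟩)
    · have hCj : C.AttachesAt j := ⟨hj, u, hC, (hvu.symm_s11.trans hvj).mono (by omega)⟩
      exact Or.inr ⟨C, ⟨z, hz, hzi⟩, j, Or.inl ⟨j, hCj, rfl⟩, by omega⟩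
  · exact Or.inl (Or.inr ⟨C, FarComponent.mem_verts_of_adj hC huv hnear, z, hz, hzi⟩)

theorem IsShortest.exists_straddles_of_isLeftOf (hP : P.IsShortest S T) (hrL : r < L)
    (hi : i ≤ P.length) (hvT : v ∈ T) (hv : P.IsLeftOf S T r L i v) :
    ∃ C : P.FarComponent r, C.Straddles S T L i := by
  rcases hv with ⟨j, hj, hvj, hji⟩ | ⟨C, hC, hz⟩
  · have := hP.length_le_add hvT hj hvj
    omega
  · exact ⟨C, hz, P.length + L, Or.inr (Or.inr ⟨⟨v, hC, hvT⟩, rfl⟩), by omega⟩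

theorem IsShortest.exists_straddles_of_walk (hP : P.IsShortest S T) (hrL : r < L)
    (hi : i ≤ P.length) (hvT : v ∈ T) (w : G.Walk u v) (hu : P.IsLeftOf S T r L i u)
    (hw : ∀ y ∈ w.support, ∀ k, DistLE G (P i) y k → L + r ≤ k) :
    ∃ C : P.FarComponent r, C.Straddles S T L i := by
  induction w with
  | nil => exact hP.exists_straddles_of_isLeftOf hrL hi hvT hu
  | @cons u u' v huu' w ih =>
    have hw' : ∀ y ∈ w.support, ∀ k, DistLE G (P i) y k → L + r ≤ k :=
      fun y hy => hw y (List.mem_cons_of_mem u hy)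
    rcases hu.of_adj hrL hi huu' (hw' u' w.start_mem_support) with hu' | hC
    exacts [ih hvT hu' hw', hC]

namespace FarComponent

variable {C : P.FarComponent r}

theorem extent_subset_Icc : C.extent S T L ⊆ Set.Icc (-L) (P.length + L) := by
  rintro _ (⟨j, hj, rfl⟩ | ⟨-, rfl⟩ | ⟨-, rfl⟩)
  · have := hj.1
    constructor <;> omega
  all_goals constructor <;> omega

theorem bddBelow_extent : BddBelow (C.extent S T L) := bddBelow_Icc.mono extent_subset_Icc

theorem bddAbove_extent : BddAbove (C.extent S T L) := bddAbove_Icc.mono extent_subset_Icc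

/-- The least element of the extent of `C`, and `0` if the extent is empty. -/
noncomputable def leftEnd (S T : Set V) (L : ℕ) (C : P.FarComponent r) : ℤ := sInf (C.extent S T L)

/-- The greatest element of the extent of `C`, and `0` if the extent is empty. -/
noncomputable def rightEnd (S T : Set V) (L : ℕ) (C : P.FarComponent r) : ℤ := sSup (C.extent S T L)

theorem leftEnd_mem (hne : (C.extent S T L).Nonempty) : C.leftEnd S T L ∈ C.extent S T L :=
  Int.csInf_mem hne bddBelow_extent

theorem rightEnd_mem (hne : (C.extent S T L).Nonempty) : C.rightEnd S T L ∈ C.extent S T L :=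
  Int.csSup_mem hne bddAbove_extent

theorem leftEnd_le {z : ℤ} (hz : z ∈ C.extent S T L) : C.leftEnd S T L ≤ z :=
  csInf_le bddBelow_extent hz

theorem le_rightEnd {z : ℤ} (hz : z ∈ C.extent S T L) : z ≤ C.rightEnd S T L :=
  le_csSup bddAbove_extent hz

theorem nonempty_extent_of_rightEnd_pos (h : 0 < C.rightEnd S T L) :
    (C.extent S T L).Nonempty := by
  by_contra! hempty
  rw [rightEnd, hempty, Int.csSup_empty] at h
  exact h.false

theorem rightEnd_le : C.rightEnd S T L ≤ P.length + L := by
  by_contra! h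
  have hpos : 0 < C.rightEnd S T L := by omega
  exact h.not_ge (extent_subset_Icc (rightEnd_mem (nonempty_extent_of_rightEnd_pos hpos))).2

theorem meets_start_of_leftEnd_le (hL : 0 < L) (hne : (C.extent S T L).Nonempty)
    (h : C.leftEnd S T L ≤ -L) : (C.verts ∩ S).Nonempty := by
  rcases leftEnd_mem hne with ⟨j, -, hj⟩ | ⟨hS, -⟩ | ⟨-, hn⟩
  · omega
  · exact hS
  · omega

theorem meets_end_of_lt_rightEnd (h : P.length < C.rightEnd S T L) : (C.verts ∩ T).Nonempty := by
  have hpos : 0 < C.rightEnd S T L := by omega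
  rcases rightEnd_mem (nonempty_extent_of_rightEnd_pos hpos) with
    ⟨j, hC, hj⟩ | ⟨-, hn⟩ | ⟨hT, -⟩
  · have := hC.1
    omega
  · omega
  · exact hT

theorem exists_isLeast_eq_leftEnd (hL : 0 < L) (hne : (C.extent S T L).Nonempty)
    (hlow : -L < C.leftEnd S T L) (hupp : C.leftEnd S T L ≤ P.length) :
    ∃ j : ℕ, IsLeast {j | C.AttachesAt j} j ∧ C.leftEnd S T L = j := by
  rcases leftEnd_mem hne with ⟨j, hC, hj⟩ | ⟨-, hn⟩ | ⟨-, hn⟩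
  · refine ⟨j, ⟨hC, fun i hi => ?_⟩, hj⟩
    have := leftEnd_le (Or.inl ⟨i, hi, rfl⟩ : (i : ℤ) ∈ C.extent S T L)
    omega
  · omega
  · omega

theorem exists_isGreatest_eq_rightEnd (hL : 0 < L) (hlow : 0 < C.rightEnd S T L)
    (hupp : C.rightEnd S T L ≤ P.length) :
    ∃ j : ℕ, IsGreatest {j | C.AttachesAt j} j ∧ C.rightEnd S T L = j := by
  rcases rightEnd_mem (nonempty_extent_of_rightEnd_pos hlow) with
    ⟨j, hC, hj⟩ | ⟨-, hn⟩ | ⟨-, hn⟩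
  · refine ⟨j, ⟨hC, fun i hi => ?_⟩, hj⟩
    have := le_rightEnd (Or.inl ⟨i, hi, rfl⟩ : (i : ℤ) ∈ C.extent S T L)
    omega
  · omega
  · omega

end FarComponent

theorem exists_isIntervalChain_extent
    (hstraddle : ∀ i ≤ P.length, ∃ C : P.FarComponent r, C.Straddles S T L i) {s : ℤ} (hs : 0 ≤ s)
    (hL : 0 < L) (hsL : 2 * s ≤ L) :
    ∃ (m : ℕ) (c : ℕ → P.FarComponent r), IsIntervalChain (FarComponent.leftEnd S T L)
      (FarComponent.rightEnd S T L) s L P.length m c ∧ (c 0).leftEnd S T L ≤ -L ∧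
      L ≤ (c 0).rightEnd S T L ∧ ∀ k < m, -L < (c (k + 1)).leftEnd S T L := by
  refine exists_isIntervalChain ⟨P.length + L, ?_⟩ hs (by omega) hsL (by omega) fun i hi hin => ?_
  · rintro _ ⟨C, rfl⟩
    exact FarComponent.rightEnd_le
  · lift i to ℕ using hi
    obtain ⟨C, ⟨y, hy, hyi⟩, z, hz, hiz⟩ := hstraddle i (by omega)
    exact ⟨C, (FarComponent.leftEnd_le hy).trans hyi, hiz.trans (FarComponent.le_rightEnd hz)⟩

theorem IsShortest.nonempty_componentChain_of_isIntervalChain (hP : P.IsShortest S T)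
    {m : ℕ} {c : ℕ → P.FarComponent 10} (hc : IsIntervalChain (FarComponent.leftEnd S T 71)
      (FarComponent.rightEnd S T 71) 21 71 P.length m c) {left right : ℕ → ℕ}
    (hS : ((c 0).verts ∩ S).Nonempty) (hright0 : 71 ≤ (c 0).rightEnd S T 71)
    (hleast : ∀ k < m, IsLeast {j | (c (k + 1)).AttachesAt j} (left k))
    (hleft : ∀ k < m, (c (k + 1)).leftEnd S T 71 = left k)
    (hgreatest : ∀ k < m, IsGreatest {j | (c k).AttachesAt j} (right k))
    (hright : ∀ k < m, (c k).rightEnd S T 71 = right k) : Nonempty (ComponentChain P S T) := by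
  obtain ⟨hleft_right, hsucc⟩ := hc.ends_le hleft hright
  have hright_zero : 0 < m → 71 ≤ right 0 := fun hm => by
    have := hright 0 hm
    omega
  exact ⟨{
    length := m + 1
    one_le_length := Nat.succ_pos m
    comp := fun k => c (k - 1)
    left := fun k => left (k - 2)
    right := fun k => Nat.casesOn k 0 right
    start_mem := hP.start_mem
    end_mem := hP.end_mem
    meets_start := hS
    meets_end := FarComponent.meets_end_of_lt_rightEnd hc.lt_last
    isLeast_left := by
      rintro (_ | _ | k) hk hkm
      exacts [by omega, by omega, hleast k (by omega)]
    isGreatest_right := by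
      rintro (_ | k) hk hkm
      exacts [by omega, hgreatest k (by omega)]
    right_zero := rfl
    right_succ := by
      rintro (_ | k) hkm
      · exact (Nat.zero_add 71).trans_le (hright_zero (by omega))
      · exact_mod_cast (hsucc k (by omega)).1
    left_succ := by
      rintro (_ | _ | k) hk hkm
      exacts [by omega, by omega, mod_cast (hsucc k (by omega)).2.1]
    left_succ_le_right := by
      rintro (_ | k) hk hkm
      exacts [by omega, mod_cast hleft_right k (by omega)]
    right_le_left := by
      rintro (_ | k) hkm
      · have := hright_zero (by omega)
        have : (right 0 : ℤ) ≤ left 1 + 2 * 21 := (hsucc 0 (by omega)).2.2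
        change 0 + 29 ≤ left 1
        omega
      · have := (hsucc k (by omega)).1
        have : (right (k + 1) : ℤ) ≤ left (k + 2) + 2 * 21 := (hsucc (k + 1) (by omega)).2.2
        change right k + 29 ≤ left (k + 2)
        omega }⟩

theorem IsShortest.nonempty_componentChain (hP : P.IsShortest S T)
    (hstraddle : ∀ i ≤ P.length, ∃ C : P.FarComponent 10, C.Straddles S T 71 i) :
    Nonempty (ComponentChain P S T) := by
  obtain ⟨m, c, hc, hleft0, hright0, hleft⟩ :=
    exists_isIntervalChain_extent hstraddle (s := 21) (by omega) (by omega) (by omega)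
  have hpos : ∀ k ≤ m, 0 < (c k).rightEnd S T 71 := fun k hk => by
    have := hc.right_zero_le (by omega) hk
    omega
  have hne : ∀ k ≤ m, ((c k).extent S T 71).Nonempty := fun k hk =>
    FarComponent.nonempty_extent_of_rightEnd_pos (hpos k hk)
  have hright : ∀ k < m, ∃ j : ℕ, IsGreatest {j | (c k).AttachesAt j} j ∧
      (c k).rightEnd S T 71 = j := fun k hk =>
    FarComponent.exists_isGreatest_eq_rightEnd (by omega) (hpos k hk.le) (hc.right_le k hk)
  have hleft' : ∀ k < m, ∃ j : ℕ, IsLeast {j | (c (k + 1)).AttachesAt j} j ∧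
      (c (k + 1)).leftEnd S T 71 = j := fun k hk =>
    FarComponent.exists_isLeast_eq_leftEnd (by omega) (hne _ hk) (hleft k hk) <| by
      have := hc.left_succ_add_le k hk
      have := hc.right_le k hk
      omega
  choose! right hgreatest hright_eq using hright
  choose! left hleast hleft_eq using hleft'
  have hS := FarComponent.meets_start_of_leftEnd_le (by omega) (hne 0 m.zero_le) hleft0
  exact hP.nonempty_componentChain_of_isIntervalChain hc hS hright0 hleast hleft_eq hgreatest
    hright_eq

end Geodesic

end Separation

end CoarseMenger

open CoarseMenger in
theorem stmt_11_general {V : Type} [Nonempty V] (G : SimpleGraph V) (S T : Set V) :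
    HasKPaths G S T 2 3 ∨ ∃ x : V, ∀ (u v : V) (w : G.Walk u v), u ∈ S → v ∈ T →
      ∃ y ∈ w.support, DistLE G x y 80 := by
  by_cases hreach : ∃ s ∈ S, ∃ t ∈ T, G.Reachable s t
  · obtain ⟨P, hP⟩ := Geodesic.exists_isShortest hreach
    refine or_iff_not_imp_right.2 fun hsep => ?_
    push Not at hsep
    obtain ⟨X⟩ := hP.nonempty_componentChain fun i hi => by
      obtain ⟨u, v, w, hu, hv, hw⟩ := hsep (P i)
      have hfar : ∀ y ∈ w.support, ∀ k, DistLE G (P i) y k → 71 + 10 ≤ k := fun y hy k hk => by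
        by_contra! hk'
        exact hw y hy (hk.mono (by omega))
      have hleft : P.IsLeftOf S T 10 71 i u :=
        hP.isLeftOf_of_mem (by omega) hi hu (hfar u w.start_mem_support)
      exact hP.exists_straddles_of_walk (by omega) hi hv w hleft hfar
    exact X.hasKPaths
  · inhabit V
    exact Or.inr ⟨default, fun u v w hu hv => (hreach ⟨u, hu, v, hv, w.reachable⟩).elim⟩

/-- Theorem 3.4: the `k = 2`, `d = 3` coarse Menger theorem with explicit constants:
for `c ≥ 7` and `ℓ ≥ 2c+5`, the bound `8ℓ + c + 2` works; in particular 161 suffices. -/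
theorem stmt_11 :
    (∀ c ℓ : ℕ, 7 ≤ c → 2 * c + 5 ≤ ℓ →
      ∀ (V : Type), Nonempty V → ∀ (G : SimpleGraph V) (S T : Set V),
        HasKPaths G S T 2 3 ∨
        ∃ x : V, ∀ (u v : V) (w : G.Walk u v), w.IsPath → u ∈ S → v ∈ T →
          ∃ y ∈ w.support, DistLE G x y (8 * ℓ + c + 2)) ∧
    (∀ (V : Type), Nonempty V → ∀ (G : SimpleGraph V) (S T : Set V),
      HasKPaths G S T 2 3 ∨
      ∃ x : V, ∀ (u v : V) (w : G.Walk u v), w.IsPath → u ∈ S → v ∈ T →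
        ∃ y ∈ w.support, DistLE G x y 161) := by
  have hbound : ∀ n, 80 ≤ n → ∀ (V : Type), Nonempty V → ∀ (G : SimpleGraph V) (S T : Set V),
      HasKPaths G S T 2 3 ∨ ∃ x : V, ∀ (u v : V) (w : G.Walk u v), w.IsPath → u ∈ S → v ∈ T →
        ∃ y ∈ w.support, DistLE G x y n := fun n hn V _ G S T =>
    (stmt_11_general G S T).imp_right fun ⟨x, hx⟩ => ⟨x, fun u v w _ hu hv =>
      let ⟨y, hy, hxy⟩ := hx u v w hu hv
      ⟨y, hy, hxy.mono hn⟩⟩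
  exact ⟨fun c ℓ hc hℓ => hbound _ (by omega), hbound 161 (by omega)⟩
end
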